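/- arXiv:1810.04495 — 9 statements merged into one kernel-verified Lean document; each statement's English description precedes it below -/
import Mathlib

section
/- Let T ⊆ (𝔽₂)⁴ be the set of the following 14 vectors: (1,0,0,0), (0,0,0,1), (0,1,1,1), (1,1,1,0), (1,1,0,1), (0,0,1,1), (1,0,1,0), (0,1,1,0), (1,1,1,1), (1,1,0,0), (0,0,1,0), (1,0,1,1), (0,1,0,1), (1,0,0,1) (i.e., all 15 nonzero vectors of (𝔽₂)⁴ except (0,1,0,0)). Then T is non-cubic: every homogeneous polynomial of degree 3 in 4 variables over 𝔽₂ which vanishes at every element of T vanishes at every element of (𝔽₂)⁴. -/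
/-!
A polynomial over `𝔽_q` in `m` variables of degree less than `(q - 1) * m` has values summing to
zero over the whole space, so it cannot be nonzero at exactly one point. For a cubic form in four
variables over `𝔽₂` the bound reads `3 < 4`, and the form vanishes at the origin for free, so among
the nonzero vectors any single one, here `(0,1,0,0)`, may be left out.
-/

section

open MvPolynomial

variable {K σ : Type*} [Field K] [Fintype K] [Fintype σ] {P : MvPolynomial σ K}

theorem eval_eq_zero_of_forall_ne_eval_eq_zero
    (hdeg : P.totalDegree < (Fintype.card K - 1) * Fintype.card σ) {a : σ → K}
    (hvanish : ∀ w ≠ a, eval w P = 0) (w : σ → K) : eval w P = 0 := by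
  classical
  rcases eq_or_ne w a with rfl | hwa
  · calc
      eval w P = ∑ v, eval v P := (Fintype.sum_eq_single w hvanish).symm
      _ = 0 := sum_eval_eq_zero P hdeg
  · exact hvanish w hwa

theorem fourteen_vectors_nonCubic_general
    (hdeg : P.totalDegree < (Fintype.card K - 1) * Fintype.card σ)
    (hconst : constantCoeff P = 0) (a : σ → K)
    (hvanish : ∀ w, w ≠ 0 → w ≠ a → eval w P = 0) (w : σ → K) : eval w P = 0 := by
  refine eval_eq_zero_of_forall_ne_eval_eq_zero hdeg (a := a) (fun v hva => ?_) w
  rcases eq_or_ne v 0 with rfl | hv0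
  · rw [eval_zero, hconst]
  · exact hvanish v hv0 hva

end

/-- The set `T` of 14 vectors of `(𝔽₂)⁴` (all 15 nonzero vectors except
`(0,1,0,0)`) is non-cubic: every homogeneous polynomial of degree 3 in 4
variables over `𝔽₂` vanishing at every element of `T` vanishes at every
vector of `(𝔽₂)⁴`. -/
theorem fourteen_vectors_nonCubic
    (P : MvPolynomial (Fin 4) (ZMod 2)) (hP : P.IsHomogeneous 3)
    (hvanish : ∀ w ∈ ([![1,0,0,0], ![0,0,0,1], ![0,1,1,1], ![1,1,1,0],
        ![1,1,0,1], ![0,0,1,1], ![1,0,1,0], ![0,1,1,0], ![1,1,1,1],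
        ![1,1,0,0], ![0,0,1,0], ![1,0,1,1], ![0,1,0,1], ![1,0,0,1]] :
        List (Fin 4 → ZMod 2)), MvPolynomial.eval w P = 0) :
    ∀ w : Fin 4 → ZMod 2, MvPolynomial.eval w P = 0 :=
  fourteen_vectors_nonCubic_general (hP.totalDegree_le.trans_lt (by decide))
    (hP.coeff_eq_zero (by decide)) ![0,1,0,0] fun w _ _ => hvanish w (by decide +revert)
end

section
/- Let R = ℤ[√2] and for each element π of the list L = [5, 11, √2+3, √2−3, 3√2−1, √2+5, √2−5, 4√2−1, 4√2+1, 5√2−3, √2−7, √2+7, 4√2−11, 1−7√2] define the vector v(π) ∈ (𝔽₂)⁴ whose four coordinates are 0 or 1 according as the residue class of √2, of 3, of −1, and of √2−1, respectively, is or is not a square in the quotient ring R/(π). Then the 14 vectors v(π), π ∈ L, are pairwise distinct, each is nonzero, and none of them equals (0,1,0,0); equivalently, {v(π) : π ∈ L} is exactly the set of all nonzero vectors of (𝔽₂)⁴ different from (0,1,0,0). -/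
open Zsqrtd in
/-- `a` is a square modulo `π` in `ℤ[√2]`: the residue class of `a` is a
square in the quotient ring `ℤ[√2]/(π)`. -/
def IsSquareModSqrt2 (a π : ℤ√2) : Prop :=
  IsSquare (Ideal.Quotient.mk (Ideal.span {π}) a)

open Zsqrtd in
open scoped Classical in
/-- The vector of quadratic characters of `√2`, `3`, `-1`, `√2 - 1`
modulo `π`. -/
noncomputable def quadCharVecSqrt2 (π : ℤ√2) : Fin 4 → ZMod 2 :=
  ![if IsSquareModSqrt2 sqrtd π then 0 else 1,
    if IsSquareModSqrt2 3 π then 0 else 1,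
    if IsSquareModSqrt2 (-1) π then 0 else 1,
    if IsSquareModSqrt2 (sqrtd - 1) π then 0 else 1]

/-!
Every `π` in the table generates the kernel of an explicit surjection from `ℤ[√2]` onto a finite
field, so being a square modulo `π` can be tested in that field. If `π` has norm `±p`, the field is
`ZMod p`, with `√2` sent to the root of `X² - 2` at which `π` vanishes: if `a` vanishes there too,
then `p` divides `a * star π`, and hence `π` divides `a`. For the inert primes `5` and `11` the
field has `p²` elements; in an extension of finite fields an element is a square if and only if
its norm is, by Euler's criterion, so the test again takes place in `ZMod p`.
-/

section FiniteField

variable {K L : Type*} [Field K] [Field L] [Finite L] [Algebra K L]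

theorem isSquare_algebraNorm_iff (x : L) : IsSquare (Algebra.norm K x) ↔ IsSquare x := by
  have : Finite K := .of_injective _ (algebraMap K L).injective
  have := Fintype.ofFinite K
  have := Fintype.ofFinite L
  by_cases hK : ringChar K = 2
  · have hL : ringChar L = 2 := Algebra.ringChar_eq K L ▸ hK
    simp only [FiniteField.isSquare_of_char_two hK, FiniteField.isSquare_of_char_two hL]
  have hL : ringChar L ≠ 2 := Algebra.ringChar_eq K L ▸ hK
  obtain rfl | hx := eq_or_ne x 0
  · simp only [Algebra.norm_zero, IsSquare.zero]
  have hdvd : Fintype.card K - 1 ∣ Fintype.card L - 1 := by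
    rw [Module.card_eq_pow_finrank (K := K) (V := L)]
    exact Nat.sub_one_dvd_pow_sub_one _ _
  have hexp : (Fintype.card L - 1) / (Fintype.card K - 1) * (Fintype.card K / 2) =
      Fintype.card L / 2 := by
    have hK2 := Nat.two_mul_odd_div_two (FiniteField.odd_card_of_char_ne_two hK)
    have hL2 := Nat.two_mul_odd_div_two (FiniteField.odd_card_of_char_ne_two hL)
    have hquot := Nat.div_mul_cancel hdvd
    rw [← hK2, ← hL2] at hquot ⊢
    linarith
  rw [FiniteField.isSquare_iff hK (Algebra.norm_ne_zero_iff.mpr hx),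
    FiniteField.isSquare_iff hL hx, ← (algebraMap K L).injective.eq_iff, map_pow, map_one,
    FiniteField.algebraMap_norm_eq_pow, Nat.card_eq_fintype_card, Nat.card_eq_fintype_card,
    ← pow_mul, hexp]

end FiniteField

theorem isSquare_quadraticAlgebraNorm_iff {K : Type*} [Field K] [Finite K] {a b : K}
    [Fact (∀ r, r ^ 2 ≠ a + b * r)] (z : QuadraticAlgebra K a b) :
    IsSquare z.norm ↔ IsSquare z := by
  have : Finite (QuadraticAlgebra K a b) := .of_equiv _ (QuadraticAlgebra.equivProd a b).symm
  rw [← isSquare_algebraNorm_iff (K := K) z, ← QuadraticAlgebra.det_toLinearMap_eq_norm]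
  rfl

theorem isSquare_mk_ker_iff {R S : Type*} [Ring R] [Semiring S] {f : R →+* S}
    (hf : Function.Surjective f) (a : R) :
    IsSquare (Ideal.Quotient.mk (RingHom.ker f) a) ↔ IsSquare (f a) := by
  let e := RingHom.quotientKerEquivOfSurjective hf
  refine ⟨fun h ↦ h.map e, fun h ↦ ?_⟩
  rw [← RingHom.quotientKerEquivOfSurjective_symm_apply hf a]
  exact h.map e.symm

section Reduction

variable {d : ℤ}

theorem ker_zsqrtdLift_eq_span {n : ℕ} [NeZero n] (s : {s : ZMod n // s * s = d}) {π : ℤ√d}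
    (hn : π.norm.natAbs = n) (hπ : Zsqrtd.lift s π = 0) :
    RingHom.ker (Zsqrtd.lift s) = Ideal.span {π} := by
  refine le_antisymm (fun a ha ↦ ?_) ((Ideal.span_singleton_le_iff_mem _).mpr hπ)
  rw [RingHom.mem_ker, Zsqrtd.lift_apply_apply] at ha
  rw [Zsqrtd.lift_apply_apply] at hπ
  have hs := s.2
  have hdvd : (π.norm : ℤ√d) ∣ a * star π := by
    rw [Zsqrtd.intCast_dvd, ← Int.natAbs_dvd, ← Int.natAbs_dvd (b := (a * star π).im), hn,
      ← ZMod.intCast_zmod_eq_zero_iff_dvd, ← ZMod.intCast_zmod_eq_zero_iff_dvd]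
    simp only [Zsqrtd.re_mul, Zsqrtd.im_mul, Zsqrtd.re_star, Zsqrtd.im_star]
    push_cast
    constructor
    · linear_combination (π.re : ZMod n) * ha - a.im * s * hπ + (a.im : ZMod n) * π.im * hs
    · linear_combination (a.im : ZMod n) * hπ - π.im * ha
  obtain ⟨c, hc⟩ := hdvd
  have hnorm : π.norm ≠ 0 := Int.natAbs_ne_zero.mp (hn ▸ NeZero.ne n)
  refine Ideal.mem_span_singleton.mpr ⟨c, Zsqrtd.eq_of_smul_eq_smul_left hnorm ?_⟩
  calc (π.norm : ℤ√d) * a = π * (a * star π) := by rw [Zsqrtd.norm_eq_mul_conj]; ring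
    _ = π.norm * (π * c) := by rw [hc]; ring

/-- Coefficientwise reduction of `ℤ√d` modulo `n`; it presents `ℤ√d ⧸ (n)` as a quadratic algebra
over `ZMod n`, which is a field when `n` is an inert prime. -/
def zsqrtdMod (d : ℤ) (n : ℕ) : ℤ√d →+* QuadraticAlgebra (ZMod n) d 0 :=
  Zsqrtd.lift ⟨QuadraticAlgebra.omega, by ext <;> simp⟩

theorem zsqrtdMod_apply (n : ℕ) (a : ℤ√d) : zsqrtdMod d n a = ⟨a.re, a.im⟩ := by
  ext <;> simp [zsqrtdMod]

theorem zsqrtdMod_surjective (n : ℕ) : Function.Surjective (zsqrtdMod d n) := fun ⟨x, y⟩ ↦ by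
  obtain ⟨u, rfl⟩ := ZMod.intCast_surjective x
  obtain ⟨v, rfl⟩ := ZMod.intCast_surjective y
  exact ⟨⟨u, v⟩, zsqrtdMod_apply n _⟩

theorem ker_zsqrtdMod (n : ℕ) : RingHom.ker (zsqrtdMod d n) = Ideal.span {(n : ℤ√d)} := by
  ext a
  rw [RingHom.mem_ker, zsqrtdMod_apply, Ideal.mem_span_singleton, ← Int.cast_natCast,
    Zsqrtd.intCast_dvd, ← ZMod.intCast_zmod_eq_zero_iff_dvd, ← ZMod.intCast_zmod_eq_zero_iff_dvd,
    QuadraticAlgebra.ext_iff]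
  rfl

theorem norm_zsqrtdMod (n : ℕ) (a : ℤ√d) : (zsqrtdMod d n a).norm = (a.norm : ZMod n) := by
  rw [zsqrtdMod_apply, QuadraticAlgebra.norm_def, Zsqrtd.norm_def]
  push_cast
  ring

theorem isSquare_mk_span_iff_isSquare_lift {n : ℕ} [NeZero n] (s : {s : ZMod n // s * s = d})
    {π : ℤ√d} (hn : π.norm.natAbs = n) (hπ : Zsqrtd.lift s π = 0) (a : ℤ√d) :
    IsSquare (Ideal.Quotient.mk (Ideal.span {π}) a) ↔ IsSquare (Zsqrtd.lift s a) := by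
  rw [← ker_zsqrtdLift_eq_span s hn hπ]
  exact isSquare_mk_ker_iff (ZMod.ringHom_surjective _) a

theorem isSquare_mk_span_natCast_iff_isSquare_norm {p : ℕ} [Fact p.Prime]
    (hd : ¬IsSquare (d : ZMod p)) (a : ℤ√d) :
    IsSquare (Ideal.Quotient.mk (Ideal.span {(p : ℤ√d)}) a) ↔ IsSquare (a.norm : ZMod p) := by
  have : Fact (∀ r : ZMod p, r ^ 2 ≠ d + 0 * r) :=
    ⟨fun r hr ↦ hd ⟨r, by linear_combination -hr⟩⟩
  rw [← ker_zsqrtdMod, isSquare_mk_ker_iff (f := zsqrtdMod d p) (zsqrtdMod_surjective p),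
    ← isSquare_quadraticAlgebraNorm_iff, norm_zsqrtdMod]

end Reduction

section Table

open Zsqrtd

theorem quadCharVecSqrt2_eq_of_mul_self_eq_two {n : ℕ} [NeZero n] (s : ZMod n)
    (hs : s * s = 2) {π : ℤ√2} (hn : π.norm.natAbs = n) (hπ : (π.re + π.im * s : ZMod n) = 0) :
    quadCharVecSqrt2 π =
      ![if IsSquare s then 0 else 1, if IsSquare (3 : ZMod n) then 0 else 1,
        if IsSquare (-1 : ZMod n) then 0 else 1, if IsSquare (s - 1) then 0 else 1] := by
  let φ : ℤ√2 →+* ZMod n := lift ⟨s, mod_cast hs⟩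
  have hφ : φ sqrtd = s := by simp [φ]
  have hφ_iff (a : ℤ√2) : IsSquareModSqrt2 a π ↔ IsSquare (φ a) :=
    isSquare_mk_span_iff_isSquare_lift _ hn hπ a
  simp only [quadCharVecSqrt2, hφ_iff, map_sub, map_neg, map_one, map_ofNat, hφ]

theorem quadCharVecSqrt2_natCast_of_not_isSquare_two {p : ℕ} [Fact p.Prime]
    (h2 : ¬IsSquare (2 : ZMod p)) :
    quadCharVecSqrt2 p =
      ![if IsSquare (-2 : ZMod p) then 0 else 1, 0, 0,
        if IsSquare (-1 : ZMod p) then 0 else 1] := by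
  have hnorm_iff (a : ℤ√2) : IsSquareModSqrt2 a p ↔ IsSquare (a.norm : ZMod p) :=
    isSquare_mk_span_natCast_iff_isSquare_norm (mod_cast h2) a
  have h9 : IsSquare (9 : ZMod p) := ⟨3, by norm_num⟩
  simp only [quadCharVecSqrt2, hnorm_iff]
  simp [norm_def, h9]

instance fact_prime_five : Fact (Nat.Prime 5) := ⟨by norm_num⟩

instance fact_prime_eleven : Fact (Nat.Prime 11) := ⟨by norm_num⟩

theorem map_quadCharVecSqrt2 :
    ([5, 11, sqrtd + 3, sqrtd - 3, 3 * sqrtd - 1, sqrtd + 5, sqrtd - 5, 4 * sqrtd - 1,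
        4 * sqrtd + 1, 5 * sqrtd - 3, sqrtd - 7, sqrtd + 7, 4 * sqrtd - 11,
        1 - 7 * sqrtd] : List (ℤ√2)).map quadCharVecSqrt2 =
      [![1, 0, 0, 0], ![0, 0, 0, 1], ![0, 1, 1, 1], ![1, 1, 1, 0], ![1, 1, 0, 1],
        ![0, 0, 1, 1], ![1, 0, 1, 0], ![0, 1, 1, 0], ![1, 1, 1, 1], ![1, 1, 0, 0],
        ![0, 0, 1, 0], ![1, 0, 1, 1], ![0, 1, 0, 1], ![1, 0, 0, 1]] := by
  have h5 := quadCharVecSqrt2_natCast_of_not_isSquare_two (p := 5) (by decide)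
  have h11 := quadCharVecSqrt2_natCast_of_not_isSquare_two (p := 11) (by decide)
  rw [Nat.cast_ofNat] at h5 h11
  simp only [List.map_cons, List.map_nil]
  rw [h5, h11,
    quadCharVecSqrt2_eq_of_mul_self_eq_two (π := sqrtd + 3) (4 : ZMod 7),
    quadCharVecSqrt2_eq_of_mul_self_eq_two (π := sqrtd - 3) (3 : ZMod 7),
    quadCharVecSqrt2_eq_of_mul_self_eq_two (π := 3 * sqrtd - 1) (6 : ZMod 17),
    quadCharVecSqrt2_eq_of_mul_self_eq_two (π := sqrtd + 5) (18 : ZMod 23),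
    quadCharVecSqrt2_eq_of_mul_self_eq_two (π := sqrtd - 5) (5 : ZMod 23),
    quadCharVecSqrt2_eq_of_mul_self_eq_two (π := 4 * sqrtd - 1) (8 : ZMod 31),
    quadCharVecSqrt2_eq_of_mul_self_eq_two (π := 4 * sqrtd + 1) (23 : ZMod 31),
    quadCharVecSqrt2_eq_of_mul_self_eq_two (π := 5 * sqrtd - 3) (17 : ZMod 41),
    quadCharVecSqrt2_eq_of_mul_self_eq_two (π := sqrtd - 7) (7 : ZMod 47),
    quadCharVecSqrt2_eq_of_mul_self_eq_two (π := sqrtd + 7) (40 : ZMod 47),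
    quadCharVecSqrt2_eq_of_mul_self_eq_two (π := 4 * sqrtd - 11) (25 : ZMod 89),
    quadCharVecSqrt2_eq_of_mul_self_eq_two (π := 1 - 7 * sqrtd) (14 : ZMod 97)]
  all_goals decide +kernel

end Table

open Zsqrtd in
/-- The table of quadratic characters over `ℚ(√2)`: for the 14 listed primes
`π` of `ℤ[√2]`, the vectors of quadratic characters of `√2, 3, -1, √2-1`
modulo `π` are pairwise distinct, and their set is exactly the set of nonzero
vectors of `(𝔽₂)⁴` different from `(0,1,0,0)`. -/
theorem quadCharTable_sqrt2 :
    ((([5, 11, sqrtd + 3, sqrtd - 3, 3*sqrtd - 1, sqrtd + 5, sqrtd - 5,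
        4*sqrtd - 1, 4*sqrtd + 1, 5*sqrtd - 3, sqrtd - 7, sqrtd + 7,
        4*sqrtd - 11, 1 - 7*sqrtd] : List (ℤ√2)).map quadCharVecSqrt2).Nodup)
    ∧ {w : Fin 4 → ZMod 2 | ∃ π ∈ ([5, 11, sqrtd + 3, sqrtd - 3, 3*sqrtd - 1,
        sqrtd + 5, sqrtd - 5, 4*sqrtd - 1, 4*sqrtd + 1, 5*sqrtd - 3,
        sqrtd - 7, sqrtd + 7, 4*sqrtd - 11, 1 - 7*sqrtd] : List (ℤ√2)),
        w = quadCharVecSqrt2 π}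
      = {w : Fin 4 → ZMod 2 | w ≠ 0 ∧ w ≠ ![0, 1, 0, 0]} := by
  simp only [eq_comm (b := quadCharVecSqrt2 _), ← List.mem_map, map_quadCharVecSqrt2]
  refine ⟨by decide, Set.ext fun w ↦ ?_⟩
  rw [Set.mem_ofPred_eq, Set.mem_ofPred_eq]
  revert w
  decide
end

section
/- Let R = ℤ[ζ] where ζ² + ζ + 1 = 0 (the Eisenstein integers, the ring of integers of ℚ(√−3), with √−3 = 2ζ+1 and (√−3+1)/2 = ζ+1). For each element π of the list L = [2ζ−1, 2ζ+3, 4ζ+3, 2ζ−3, 2ζ+5, 4ζ+7, 8ζ+9] define the vector v(π) ∈ (𝔽₂)³ whose three coordinates are 0 or 1 according as the residue class of 2ζ+1, of 2, and of ζ+1, respectively, is or is not a square in the quotient ring R/(π). Then the 7 vectors v(π), π ∈ L, are pairwise distinct and each is nonzero; equivalently, {v(π) : π ∈ L} = (𝔽₂)³ \ {0}. -/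
/-- The Eisenstein integers `ℤ[ζ] = ℤ[X]/(X² + X + 1)`, the ring of integers
of `ℚ(√-3)`. -/
noncomputable abbrev ZZeta : Type :=
  AdjoinRoot ((Polynomial.X)^2 + Polynomial.X + 1 : Polynomial ℤ)

/-- `ζ = (-1 + √-3)/2`, the class of `X`, satisfying `ζ² + ζ + 1 = 0`. -/
noncomputable def zeta : ZZeta := AdjoinRoot.root _

/-- `a` is a square modulo `π` in `ℤ[ζ]`. -/
def IsSquareModZeta (a π : ZZeta) : Prop :=
  IsSquare (Ideal.Quotient.mk (Ideal.span {π}) a)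

open scoped Classical in
/-- The vector of quadratic characters of `√-3 = 2ζ + 1`, `2`, `ζ + 1`
modulo `π`. -/
noncomputable def quadCharVecZeta (π : ZZeta) : Fin 3 → ZMod 2 :=
  ![if IsSquareModZeta (2*zeta + 1) π then 0 else 1,
    if IsSquareModZeta 2 π then 0 else 1,
    if IsSquareModZeta (zeta + 1) π then 0 else 1]

/-!
If `u` and `v` are coprime, then `u` is invertible modulo the norm `N = u² - uv + v²` of `uζ + v`,
and reduction at `ζ = -v / u` identifies `ℤ[ζ]/(uζ + v)` with `ℤ/N`: modulo `uζ + v` every element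
is congruent to an integer, because `ζ` is, and the integers divisible by `uζ + v` are the multiples
of `N`. The seven elements have norms `7, 7, 13, 19, 19, 37, 73`, so every entry of the table is
decided by listing the squares in `ℤ/N`.
-/

theorem isSquare_quotient_mk_iff_of_ker_eq {R S : Type*} [CommRing R] [Ring S] {φ : R →+* S}
    {I : Ideal R} (hφ : Function.Surjective φ) (hker : RingHom.ker φ = I) (a : R) :
    IsSquare (Ideal.Quotient.mk I a) ↔ IsSquare (φ a) := by
  subst hker
  let e := RingHom.quotientKerEquivOfSurjective hφ
  have he : e (Ideal.Quotient.mk (RingHom.ker φ) a) = φ a := rfl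
  refine ⟨fun h => he ▸ h.map e, fun h => ?_⟩
  rw [← e.symm_apply_apply (Ideal.Quotient.mk (RingHom.ker φ) a), he]
  exact h.map e.symm

theorem zeta_sq_add_zeta_add_one : zeta ^ 2 + zeta + 1 = 0 :=
  AdjoinRoot.mk_self (f := (Polynomial.X ^ 2 + Polynomial.X + 1 : Polynomial ℤ))

theorem exists_ringHom_apply_zeta {S : Type*} [CommRing S] {t : S} (ht : t ^ 2 + t + 1 = 0) :
    ∃ φ : ZZeta →+* S, φ zeta = t :=
  ⟨AdjoinRoot.lift (Int.castRingHom S) t (by simpa using ht), AdjoinRoot.lift_root _⟩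

theorem linear_zeta_mul_conj (u v : ZZeta) :
    (u * zeta + v) * ((v - u) - u * zeta) = u ^ 2 - u * v + v ^ 2 := by
  linear_combination -u ^ 2 * zeta_sq_add_zeta_add_one

theorem linear_zeta_dvd_norm (u v : ℤ) :
    (u * zeta + v : ZZeta) ∣ ((u ^ 2 - u * v + v ^ 2 : ℤ) : ZZeta) :=
  ⟨_, by push_cast; exact (linear_zeta_mul_conj u v).symm⟩

theorem isCoprime_norm_of_isCoprime {R : Type*} [CommRing R] {u v : R} (huv : IsCoprime u v) :
    IsCoprime u (u ^ 2 - u * v + v ^ 2) := by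
  have h : u ^ 2 - u * v + v ^ 2 = v ^ 2 + u * (u - v) := by ring
  exact h ▸ huv.pow_right.add_mul_left_right (u - v)

theorem exists_dvd_zeta_sub_intCast {u v : ℤ} (huv : IsCoprime u v) :
    ∃ t : ℤ, (u * zeta + v : ZZeta) ∣ zeta - t := by
  obtain ⟨r, s, hrs⟩ := isCoprime_norm_of_isCoprime huv
  refine ⟨-(r * v), ?_⟩
  have hrs' : (r * u + s * (u ^ 2 - u * v + v ^ 2) : ZZeta) = 1 := by
    simpa using congrArg (Int.cast : ℤ → ZZeta) hrs
  have hzeta : zeta - (-(r * v) : ℤ) =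
      r * (u * zeta + v) + s * zeta * (u ^ 2 - u * v + v ^ 2 : ℤ) := by
    push_cast
    linear_combination -zeta * hrs'
  rw [hzeta]
  exact dvd_add (dvd_mul_left _ _) ((linear_zeta_dvd_norm u v).mul_left _)

theorem exists_root_sub_of_dvd_sub_of {R : Type*} [CommRing R] {f : Polynomial R} (t : R)
    (x : AdjoinRoot f) :
    ∃ m : R, AdjoinRoot.root f - AdjoinRoot.of f t ∣ x - AdjoinRoot.of f m := by
  induction x using AdjoinRoot.induction_on with
  | ih p =>
    exact ⟨p.eval t, by
      simpa using map_dvd (AdjoinRoot.mk f) (Polynomial.X_sub_C_dvd_sub_C_eval (a := t) (p := p))⟩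

theorem ker_eq_span_linear_zeta {S : Type*} [Ring S] {n : ℕ} [CharP S n] {u v : ℤ}
    (huv : IsCoprime u v) (hn : u ^ 2 - u * v + v ^ 2 = n) {φ : ZZeta →+* S}
    (hφ : φ (u * zeta + v) = 0) :
    RingHom.ker φ = Ideal.span {(u * zeta + v : ZZeta)} := by
  refine le_antisymm (fun x hx => ?_) (by simpa [Ideal.span_le] using hφ)
  obtain ⟨t, ht⟩ := exists_dvd_zeta_sub_intCast huv
  obtain ⟨m, hm⟩ := exists_root_sub_of_dvd_sub_of t x
  have hxm : (u * zeta + v : ZZeta) ∣ x - m := ht.trans (by simpa [zeta] using hm)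
  have hφm : φ m = 0 := by
    have h := map_dvd φ hxm
    rwa [hφ, zero_dvd_iff, map_sub, RingHom.mem_ker.mp hx, zero_sub, neg_eq_zero] at h
  have hnm : (n : ℤ) ∣ m := by
    rwa [map_intCast, CharP.intCast_eq_zero_iff S n] at hφm
  have hum : (u * zeta + v : ZZeta) ∣ m :=
    (linear_zeta_dvd_norm u v).trans (hn ▸ map_dvd (Int.castRingHom ZZeta) hnm)
  exact Ideal.mem_span_singleton.mpr ((dvd_iff_dvd_of_dvd_sub hxm).mpr hum)

theorem sq_add_self_add_one_eq_zero_of_linear {R : Type*} [CommRing R] {u v t : R}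
    (huv : IsCoprime u v) (hnorm : u ^ 2 - u * v + v ^ 2 = 0) (ht : u * t + v = 0) :
    t ^ 2 + t + 1 = 0 := by
  have hu : IsUnit u := isCoprime_zero_right.mp (hnorm ▸ isCoprime_norm_of_isCoprime huv)
  refine (hu.pow 2).mul_right_eq_zero.mp ?_
  linear_combination (u * t + u - v) * ht + hnorm

theorem quadCharVecZeta_eq_zmod {n : ℕ} [NeZero n] {π : ZZeta} (u v : ℤ) (t : ZMod n)
    (hπ : π = u * zeta + v) (huv : IsCoprime u v) (hn : u ^ 2 - u * v + v ^ 2 = n)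
    (ht : u * t + v = 0) :
    quadCharVecZeta π = ![if IsSquare (2 * t + 1) then 0 else 1,
      if IsSquare (2 : ZMod n) then 0 else 1, if IsSquare (t + 1) then 0 else 1] := by
  have hnorm : (u : ZMod n) ^ 2 - u * v + v ^ 2 = 0 := by
    simpa using congrArg (Int.cast : ℤ → ZMod n) hn
  have hroot : t ^ 2 + t + 1 = 0 :=
    sq_add_self_add_one_eq_zero_of_linear (huv.map (Int.castRingHom (ZMod n))) hnorm ht
  obtain ⟨φ, hφ⟩ := exists_ringHom_apply_zeta hroot
  have hker : RingHom.ker φ = Ideal.span {π} :=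
    hπ ▸ ker_eq_span_linear_zeta huv hn (by simpa [hφ] using ht)
  have hsq (a : ZZeta) : IsSquareModZeta a π ↔ IsSquare (φ a) :=
    isSquare_quotient_mk_iff_of_ker_eq (ZMod.ringHom_surjective φ) hker a
  simp only [quadCharVecZeta, hsq, map_add, map_mul, map_one, map_ofNat φ 2, hφ]

set_option maxRecDepth 10000 in
theorem map_quadCharVecZeta :
    ([2*zeta - 1, 2*zeta + 3, 4*zeta + 3, 2*zeta - 3, 2*zeta + 5,
        4*zeta + 7, 8*zeta + 9] : List ZZeta).map quadCharVecZeta =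
      [![0, 0, 1], ![1, 0, 1], ![1, 1, 0], ![0, 1, 1], ![1, 1, 1], ![0, 1, 0], ![1, 0, 0]] := by
  simp only [List.map_cons, List.map_nil, List.cons.injEq, and_true]
  refine ⟨(quadCharVecZeta_eq_zmod 2 (-1) (4 : ZMod 7) ?_ ?_ ?_ ?_).trans ?_,
    (quadCharVecZeta_eq_zmod 2 3 (2 : ZMod 7) ?_ ?_ ?_ ?_).trans ?_,
    (quadCharVecZeta_eq_zmod 4 3 (9 : ZMod 13) ?_ ?_ ?_ ?_).trans ?_,
    (quadCharVecZeta_eq_zmod 2 (-3) (11 : ZMod 19) ?_ ?_ ?_ ?_).trans ?_,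
    (quadCharVecZeta_eq_zmod 2 5 (7 : ZMod 19) ?_ ?_ ?_ ?_).trans ?_,
    (quadCharVecZeta_eq_zmod 4 7 (26 : ZMod 37) ?_ ?_ ?_ ?_).trans ?_,
    (quadCharVecZeta_eq_zmod 8 9 (8 : ZMod 73) ?_ ?_ ?_ ?_).trans ?_⟩
  all_goals first | decide | norm_num [sub_eq_add_neg]

/-- The table of quadratic characters over `ℚ(√-3)`: for the 7 listed primes
`π` of `ℤ[ζ]` (these are `√-3 - 2, √-3 + 2, 1 + 2√-3, √-3 - 4, √-3 + 4,
5 + 2√-3, 5 + 4√-3`, with `√-3 = 2ζ + 1`), the vectors of quadratic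
characters of `2ζ+1, 2, ζ+1` modulo `π` are pairwise distinct and nonzero;
their set is exactly `(𝔽₂)³ \ {0}`. -/
theorem quadCharTable_sqrtNeg3 :
    ((([2*zeta - 1, 2*zeta + 3, 4*zeta + 3, 2*zeta - 3, 2*zeta + 5,
        4*zeta + 7, 8*zeta + 9] : List ZZeta).map quadCharVecZeta).Nodup)
    ∧ {w : Fin 3 → ZMod 2 | ∃ π ∈ ([2*zeta - 1, 2*zeta + 3, 4*zeta + 3,
        2*zeta - 3, 2*zeta + 5, 4*zeta + 7, 8*zeta + 9] : List ZZeta),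
        w = quadCharVecZeta π}
      = {w : Fin 3 → ZMod 2 | w ≠ 0} := by
  constructor
  · rw [map_quadCharVecZeta]
    decide
  · ext w
    simp only [Set.mem_ofPred_eq, eq_comm (a := w)]
    rw [← List.mem_map, map_quadCharVecZeta]
    revert w
    decide
end

section
/- Let F be a field with 25 elements and let s ∈ F satisfy s² = 2. Then in F[X] one has the factorization X⁶ − 2X³ − 1 = (X³ + s − 1)·(X³ − s − 1), and both cubic polynomials X³ + s − 1 and X³ − s − 1 are irreducible over F. -/
/-!
Put `w = (1 + s)⁴ = 2 + 2s`. In characteristic `5` one has `w² + w + 1 = 0`, so `w` is a primitive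
cube root of unity. If `1 + s` were a cube `b³`, then `b⁴` would be a primitive ninth root of unity,
which does not exist in a field with `25` elements as `9 ∤ 24`. Hence `X³ - (1 + s)` is irreducible,
and `-s` is a square root of `2` as well.
-/

open Polynomial

theorem isPrimitiveRoot_of_pow_prime {M : Type*} [CommMonoid M] {p n : ℕ} (hp : p.Prime) {ζ : M}
    (hζ : IsPrimitiveRoot (ζ ^ p) (p ^ (n + 1))) : IsPrimitiveRoot ζ (p ^ (n + 2)) := by
  have : Fact p.Prime := ⟨hp⟩
  have not_pow_eq_one : ¬ζ ^ p ^ (n + 1) = 1 := by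
    rw [pow_succ', pow_mul]
    exact hζ.pow_ne_one_of_pos_of_lt (pow_ne_zero n hp.ne_zero)
      (Nat.pow_lt_pow_right hp.one_lt n.lt_succ_self)
  have pow_eq_one : ζ ^ p ^ (n + 2) = 1 := by
    rw [pow_succ', pow_mul, hζ.pow_eq_one]
  exact IsPrimitiveRoot.iff_orderOf.2 (orderOf_eq_prime_pow not_pow_eq_one pow_eq_one)

theorem X_pow_sub_C_irreducible_of_isPrimitiveRoot_pow {F : Type*} [Field F] {p n k : ℕ}
    (hp : p.Prime) (hF : ∀ ζ : F, ¬IsPrimitiveRoot ζ (p ^ (n + 2))) {a : F}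
    (ha : IsPrimitiveRoot (a ^ k) (p ^ (n + 1))) : Irreducible (X ^ p - C a : F[X]) := by
  refine X_pow_sub_C_irreducible_of_prime hp fun b hb ↦ hF (b ^ k) ?_
  apply isPrimitiveRoot_of_pow_prime hp
  rwa [pow_right_comm, hb]

theorem dvd_card_sub_one_of_isPrimitiveRoot {G : Type*} [CommGroupWithZero G] [Fintype G]
    {ζ : G} {n : ℕ} (hn : n ≠ 0) (hζ : IsPrimitiveRoot ζ n) : n ∣ Fintype.card G - 1 :=
  hζ.dvd_of_pow_eq_one _ (FiniteField.pow_card_sub_one_eq_one ζ (hζ.isUnit hn).ne_zero)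

theorem isPrimitiveRoot_three_of_sq_add_self_add_one_eq_zero {R : Type*} [CommRing R]
    (h3 : (3 : R) ≠ 0) {w : R} (hw : w ^ 2 + w + 1 = 0) : IsPrimitiveRoot w 3 := by
  have : Fact (Nat.Prime 3) := ⟨Nat.prime_three⟩
  have cube_eq_one : w ^ 3 = 1 := by linear_combination (w - 1) * hw
  have ne_one : w ≠ 1 := by
    rintro rfl
    exact h3 (by linear_combination hw)
  exact IsPrimitiveRoot.iff_orderOf.2 (orderOf_eq_prime cube_eq_one ne_one)

theorem isPrimitiveRoot_one_add_pow_four {R : Type*} [CommRing R] [CharP R 5] {s : R}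
    (hs : s ^ 2 = 2) : IsPrimitiveRoot ((1 + s) ^ 4) 3 := by
  have five_eq_zero : (5 : R) = 0 := CharP.ofNat_eq_zero R 5
  have h3 : (3 : R) ≠ 0 := by
    exact_mod_cast (NeZero.of_not_dvd R (p := 5) (n := 3) (by decide)).out
  have pow_four : (1 + s) ^ 4 = 2 + 2 * s := by
    linear_combination (s ^ 2 + 4 * s + 8) * hs + (3 + 2 * s) * five_eq_zero
  apply isPrimitiveRoot_three_of_sq_add_self_add_one_eq_zero h3
  rw [pow_four]
  linear_combination 4 * hs + (3 + 2 * s) * five_eq_zero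

theorem X_pow_three_sub_C_one_add_irreducible {F : Type*} [Field F] [CharP F 5]
    (hF : ∀ ζ : F, ¬IsPrimitiveRoot ζ 9) {s : F} (hs : s ^ 2 = 2) :
    Irreducible (X ^ 3 - C (1 + s) : F[X]) :=
  X_pow_sub_C_irreducible_of_isPrimitiveRoot_pow (n := 0) Nat.prime_three hF
    (isPrimitiveRoot_one_add_pow_four hs)

theorem X_pow_two_mul_sub_two_mul_X_pow_sub_one_eq_mul {R : Type*} [CommRing R] {s : R}
    (hs : s ^ 2 = 2) (n : ℕ) :
    (X ^ (2 * n) - 2 * X ^ n - 1 : R[X]) = (X ^ n + C s - 1) * (X ^ n - C s - 1) := by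
  have C_sq : (C s : R[X]) ^ 2 = 2 := by rw [← C_pow, hs, C_ofNat]
  linear_combination C_sq

theorem factorization_x6_sub_2x3_sub_1_mod_5_general {F : Type*} [Field F] [CharP F 5]
    (hF : ∀ ζ : F, ¬IsPrimitiveRoot ζ 9) {s : F} (hs : s ^ 2 = 2) :
    (X ^ 6 - 2 * X ^ 3 - 1 : F[X]) = (X ^ 3 + C s - 1) * (X ^ 3 - C s - 1) ∧
    Irreducible (X ^ 3 + C s - 1 : F[X]) ∧
    Irreducible (X ^ 3 - C s - 1 : F[X]) := by
  have neg_s_sq : (-s) ^ 2 = 2 := by rw [neg_sq, hs]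
  have add_eq : (X ^ 3 + C s - 1 : F[X]) = X ^ 3 - C (1 + -s) := by
    rw [C_add, C_neg, C_1]; ring
  have sub_eq : (X ^ 3 - C s - 1 : F[X]) = X ^ 3 - C (1 + s) := by
    rw [C_add, C_1]; ring
  refine ⟨X_pow_two_mul_sub_two_mul_X_pow_sub_one_eq_mul hs 3, ?_, ?_⟩
  · rw [add_eq]
    exact X_pow_three_sub_C_one_add_irreducible hF neg_s_sq
  · rw [sub_eq]
    exact X_pow_three_sub_C_one_add_irreducible hF hs

open Polynomial in
/-- Over the field `F = 𝔽₂₅` with `s = √2 ∈ F`, one has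
`X⁶ - 2X³ - 1 = (X³ + s - 1)(X³ - s - 1)`, and both cubic factors are
irreducible over `F`. -/
theorem factorization_x6_sub_2x3_sub_1_mod_5
    (F : Type) [Field F] [Fintype F] (hF : Fintype.card F = 25)
    (s : F) (hs : s ^ 2 = 2) :
    (X^6 - 2*X^3 - 1 : F[X]) = (X^3 + C s - 1) * (X^3 - C s - 1) ∧
    Irreducible (X^3 + C s - 1 : F[X]) ∧
    Irreducible (X^3 - C s - 1 : F[X]) := by
  have : Fact (Nat.Prime 5) := ⟨Nat.prime_five⟩
  have : CharP F 5 := charP_of_card_eq_prime_pow (f := 2) hF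
  exact factorization_x6_sub_2x3_sub_1_mod_5_general
    (fun ζ hζ ↦ by simpa [hF] using dvd_card_sub_one_of_isPrimitiveRoot (by decide) hζ) hs
end

section
/- Let F be a field with 9 elements and let φ ∈ F satisfy φ² + φ = 1. Then in F[X] one has the factorization X⁶ − 2X⁵ − 2X − 1 = (X³ − X² + φX + φ)·(X³ − X² − (1+φ)X − (1+φ)), and both cubic factors are irreducible over F. -/
/-!
Writing `φ' = -(1 + φ)` for the other root of `T² + T - 1`, both cubics have the form
`X³ - X² + tX + t` with `t ∈ {φ, φ'}`, so it suffices to show that this cubic has no root for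
`t = φ`. In characteristic 3 the shift `y = x + φ` kills its linear term, and `w = (φy)⁻¹` then
satisfies the Artin–Schreier equation `w³ - w = -φ⁻¹ = -(1 + φ)`. Over `𝔽_{3ⁿ}` the left-hand side
has trace `0`, while `(1 + φ)³ = 1 - (1 + φ)` forces `Tr (1 + φ) = -n`, so `3 ∤ n` rules out a root.
-/

section Trace

variable {K L : Type*} [Field K] [Fintype K] [Field L] [Algebra K L] [Algebra.IsAlgebraic K L]

theorem trace_pow_card_eq_trace (x : L) :
    Algebra.trace K L (x ^ Fintype.card K) = Algebra.trace K L x :=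
  Algebra.trace_eq_of_algEquiv (FiniteField.frobeniusAlgEquivOfAlgebraic K L) x

theorem trace_eq_zero_of_pow_card_sub_self_eq {x c : L} (h : x ^ Fintype.card K - x = c) :
    Algebra.trace K L c = 0 := by
  rw [← h, map_sub, trace_pow_card_eq_trace, sub_self]

end Trace

theorem trace_one_add_of_sq_add_self_eq_one {L : Type*} [Field L] [Algebra (ZMod 3) L]
    [Algebra.IsAlgebraic (ZMod 3) L] {φ : L} (hφ : φ ^ 2 + φ = 1) :
    Algebra.trace (ZMod 3) L (1 + φ) = -Module.finrank (ZMod 3) L := by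
  have : CharP L 3 := charP_of_injective_algebraMap' (ZMod 3) 3
  have three_eq_zero : (3 : L) = 0 := CharP.cast_eq_zero L 3
  have frobenius : (1 + φ) ^ 3 = 1 - (1 + φ) := by
    linear_combination (φ + 2) * hφ + (φ + 1) * three_eq_zero
  have trace_frobenius : Algebra.trace (ZMod 3) L ((1 + φ) ^ 3) =
      Algebra.trace (ZMod 3) L (1 + φ) := by
    simpa only [ZMod.card] using trace_pow_card_eq_trace (K := ZMod 3) (1 + φ)
  have trace_one : Algebra.trace (ZMod 3) L 1 = Module.finrank (ZMod 3) L := by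
    simpa using Algebra.trace_algebraMap (S := L) (1 : ZMod 3)
  rw [frobenius, map_sub, trace_one] at trace_frobenius
  have three_eq_zero_zmod : (3 : ZMod 3) = 0 := rfl
  linear_combination trace_frobenius + Algebra.trace (ZMod 3) L (1 + φ) * three_eq_zero_zmod

section Cubic

open Polynomial

/-- The cubic `X³ - X² + φX + φ`. The two factors of the sextic are its values at the two roots
`φ` and `-(1 + φ)` of `T² + T - 1`. -/
noncomputable def cubicFactor {R : Type*} [CommRing R] (φ : R) : R[X] :=
  X ^ 3 - X ^ 2 + C φ * X + C φ

theorem cubicFactor_neg_one_add {R : Type*} [CommRing R] (φ : R) :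
    cubicFactor (-(1 + φ)) = X ^ 3 - X ^ 2 - C (1 + φ) * X - C (1 + φ) := by
  rw [cubicFactor, C_neg]
  ring

theorem sextic_eq_cubicFactor_mul_cubicFactor {R : Type*} [CommRing R] {φ : R}
    (hφ : φ ^ 2 + φ = 1) :
    (X ^ 6 - 2 * X ^ 5 - 2 * X - 1 : R[X]) = cubicFactor φ * cubicFactor (-(1 + φ)) := by
  have hCφ : (C φ : R[X]) ^ 2 + C φ = 1 := by
    rw [← C_pow, ← C_add, hφ, C_1]
  rw [cubicFactor_neg_one_add, cubicFactor, C_add, C_1]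
  linear_combination (X + 1) ^ 2 * hCφ

theorem natDegree_cubicFactor {R : Type*} [CommRing R] [Nontrivial R] (φ : R) :
    (cubicFactor φ).natDegree = 3 := by
  unfold cubicFactor
  compute_degree!

theorem exists_pow_three_sub_self_eq_of_isRoot_cubicFactor {K : Type*} [Field K] [CharP K 3]
    {φ x : K} (hφ : φ ^ 2 + φ = 1) (hx : (cubicFactor φ).IsRoot x) :
    ∃ w : K, w ^ 3 - w = -(1 + φ) := by
  have three_eq_zero : (3 : K) = 0 := CharP.cast_eq_zero K 3
  have root_eq : x ^ 3 - x ^ 2 + φ * x + φ = 0 := by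
    simpa [cubicFactor] using hx
  obtain ⟨y, rfl⟩ : ∃ y, x = y - φ := ⟨x + φ, by ring⟩
  have shifted_eq : y ^ 3 - y ^ 2 = φ ^ 2 := by
    linear_combination root_eq + φ * hφ + (y ^ 2 * φ - y * φ ^ 2 - y * φ) * three_eq_zero
  have φ_pow_four : φ ^ 4 = -1 := by
    linear_combination (φ ^ 2 - φ + 2) * hφ + (1 - φ) * three_eq_zero
  have φ_ne_zero : φ ≠ 0 := by
    rintro rfl
    simp at hφ
  have y_ne_zero : y ≠ 0 := by
    rintro rfl
    exact pow_ne_zero 2 φ_ne_zero (by linear_combination -shifted_eq)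
  refine ⟨(φ * y)⁻¹, ?_⟩
  field_simp
  linear_combination φ_pow_four + φ ^ 2 * shifted_eq + φ ^ 2 * y ^ 3 * hφ

theorem irreducible_cubicFactor {F : Type*} [Field F] [Algebra (ZMod 3) F]
    (hF : ¬ 3 ∣ Module.finrank (ZMod 3) F) {φ : F} (hφ : φ ^ 2 + φ = 1) :
    Irreducible (cubicFactor φ) := by
  have : FiniteDimensional (ZMod 3) F :=
    Module.finite_of_finrank_pos (Nat.pos_of_ne_zero fun h ↦ hF (h ▸ dvd_zero 3))
  have : CharP F 3 := charP_of_injective_algebraMap' (ZMod 3) 3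
  refine irreducible_of_degree_le_three_of_not_isRoot (by simp [natDegree_cubicFactor])
    fun x hx ↦ ?_
  obtain ⟨w, hw⟩ := exists_pow_three_sub_self_eq_of_isRoot_cubicFactor hφ hx
  have trace_eq_zero : Algebra.trace (ZMod 3) F (-(1 + φ)) = 0 :=
    trace_eq_zero_of_pow_card_sub_self_eq (x := w) (by rwa [ZMod.card])
  rw [map_neg, trace_one_add_of_sq_add_self_eq_one hφ, neg_neg] at trace_eq_zero
  exact hF ((ZMod.natCast_eq_zero_iff _ 3).mp trace_eq_zero)

end Cubic

theorem finrank_zmod_eq_of_card_eq_pow {p n : ℕ} [Fact p.Prime] {V : Type*} [AddCommGroup V]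
    [Module (ZMod p) V] [Fintype V] (hV : Fintype.card V = p ^ n) :
    Module.finrank (ZMod p) V = n := by
  have card_eq : p ^ n = p ^ Module.finrank (ZMod p) V := by
    rw [← hV, Module.card_eq_pow_finrank (K := ZMod p), ZMod.card]
  exact (Nat.pow_right_injective (Fact.out : p.Prime).two_le card_eq).symm

open Polynomial in
theorem factorization_mod_3_sqrt5_general {F : Type*} [Field F] [Fintype F] {n : ℕ}
    (hn : ¬ 3 ∣ n) (hF : Fintype.card F = 3 ^ n) {φ : F} (hφ : φ ^ 2 + φ = 1) :
    (X ^ 6 - 2 * X ^ 5 - 2 * X - 1 : F[X]) =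
      (X ^ 3 - X ^ 2 + C φ * X + C φ) * (X ^ 3 - X ^ 2 - C (1 + φ) * X - C (1 + φ)) ∧
    Irreducible (X ^ 3 - X ^ 2 + C φ * X + C φ : F[X]) ∧
    Irreducible (X ^ 3 - X ^ 2 - C (1 + φ) * X - C (1 + φ) : F[X]) := by
  have : CharP F 3 := charP_of_card_eq_prime_pow hF
  let : Algebra (ZMod 3) F := ZMod.algebra F 3
  have not_dvd_finrank : ¬ 3 ∣ Module.finrank (ZMod 3) F := by
    rwa [finrank_zmod_eq_of_card_eq_pow hF]
  have hφ_conj : (-(1 + φ)) ^ 2 + -(1 + φ) = 1 := by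
    linear_combination hφ
  rw [← cubicFactor_neg_one_add, ← cubicFactor]
  exact ⟨sextic_eq_cubicFactor_mul_cubicFactor hφ, irreducible_cubicFactor not_dvd_finrank hφ,
    irreducible_cubicFactor not_dvd_finrank hφ_conj⟩

open Polynomial in
/-- Over the field `F = 𝔽₉` with `φ ∈ F` satisfying `φ² + φ = 1`, one has
`X⁶ - 2X⁵ - 2X - 1 = (X³ - X² + φX + φ)(X³ - X² - (1+φ)X - (1+φ))`, and both
cubic factors are irreducible over `F`. -/
theorem factorization_mod_3_sqrt5
    (F : Type) [Field F] [Fintype F] (hF : Fintype.card F = 9)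
    (φ : F) (hφ : φ ^ 2 + φ = 1) :
    (X^6 - 2*X^5 - 2*X - 1 : F[X])
      = (X^3 - X^2 + C φ * X + C φ) * (X^3 - X^2 - C (1 + φ) * X - C (1 + φ)) ∧
    Irreducible (X^3 - X^2 + C φ * X + C φ : F[X]) ∧
    Irreducible (X^3 - X^2 - C (1 + φ) * X - C (1 + φ) : F[X]) :=
  factorization_mod_3_sqrt5_general (n := 2) (by decide) hF hφ
end

section
/- Let K be a field of characteristic different from 2 containing an element s with s² = 2. In the polynomial ring K[x,y,z,v] define B = x(x−z)(x−v)(x−z−v)·y(y−z)(y−v)(y+v+2z), and define P₁ = x(x−v−z)(z−v)(3y+v), P₂ = (1/2)(3z+v)(v²−2xv+zv+2x²−2xz)(y−v), P₃ = (1/2)(v²−2xv+zv+2x²−2xz)(3y+v)(z+v), P₄ = (1/2)(v²−2xv+zv+2x²−2xz)(3y+v)(z−v), and P_u = (s/2)·(v−z)(v+3y)²·v²·(2x−v−z)(v+z)(3z+v)(v²−2xv+zv+2x²−2xz)². Then one has the identity of polynomials B(P₁, P₂, P₃, P₄) = P_u² · B(x, y, z, v) in K[x,y,z,v]. -/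
/-!
The octic `B` is homogeneous, so `2Ψ` may replace `Ψ`; its coordinates have integral coefficients.
Each of the eight planes of the octic pulls back under `2Ψ`, up to a constant, to a product of
octic planes and of factors of `P_u`. Multiplying the eight factorizations gives, over every
commutative ring, `B(2Ψ) = 2 · (8J)² · B` where `P_u = (s / 2) · J`. The constant `2` is not a
rational square, and this is what forces `√2` into `P_u`.
-/

namespace DoubleOctic

section CommRing

variable {A : Type*} [CommRing A]

/-- The octic form `B`, product of eight linear forms in the coordinates `(x, y, z, v)` of `p`; the
double octic is `u² = octic p`. -/
def octic (p : Fin 4 → A) : A :=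
  p 0 * (p 0 - p 2) * (p 0 - p 3) * (p 0 - p 2 - p 3)
    * p 1 * (p 1 - p 2) * (p 1 - p 3) * (p 1 + p 3 + 2 * p 2)

/-- The quadratic form `Q = v² - 2xv + zv + 2x² - 2xz`, common factor of `P₂`, `P₃` and `P₄`. -/
def quadric (x z v : A) : A :=
  v ^ 2 - 2 * x * v + z * v + 2 * x ^ 2 - 2 * x * z

/-- The coordinates `(P₁, P₂, P₃, P₄)` of the rational map `Ψ`. The parameter `c` stands for `1/2`,
so that the formulas make sense in a commutative ring. -/
def endo (c x y z v : A) : Fin 4 → A :=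
  ![x * (x - v - z) * (z - v) * (3 * y + v),
    c * (3 * z + v) * quadric x z v * (y - v),
    c * quadric x z v * (3 * y + v) * (z + v),
    c * quadric x z v * (3 * y + v) * (z - v)]

/-- The coordinates of `2Ψ`, which need no denominators. -/
def twoEndo (x y z v : A) : Fin 4 → A :=
  ![2 * (x * (x - v - z)) * (z - v) * (3 * y + v),
    quadric x z v * (3 * z + v) * (y - v),
    quadric x z v * (3 * y + v) * (z + v),
    quadric x z v * (3 * y + v) * (z - v)]

/-- The multiplier `P_u` of the coordinate `u` under `Ψ`, with its leading constant `s/2` replaced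
by the parameter `d`. -/
def multiplier (d x y z v : A) : A :=
  d * (v - z) * (v + 3 * y) ^ 2 * v ^ 2
    * (2 * x - v - z) * (v + z) * (3 * z + v) * quadric x z v ^ 2

theorem aeval_octic_X {R : Type*} [CommRing R] [Algebra R A] (p : Fin 4 → A) :
    MvPolynomial.aeval p (octic MvPolynomial.X : MvPolynomial (Fin 4) R) = octic p := by
  simp only [octic, map_mul, map_sub, map_add, map_ofNat, MvPolynomial.aeval_X]

theorem octic_smul (c : A) (p : Fin 4 → A) : octic (c • p) = c ^ 8 * octic p := by
  simp only [octic, Pi.smul_apply, smul_eq_mul]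
  ring

theorem multiplier_eq_mul_multiplier_one (d x y z v : A) :
    multiplier d x y z v = d * multiplier 1 x y z v := by
  unfold multiplier
  ring

theorem smul_twoEndo {c : A} (hc : 2 * c = 1) (x y z v : A) :
    c • twoEndo x y z v = endo c x y z v := by
  ext i
  fin_cases i <;>
    simp only [twoEndo, endo, Fin.zero_eta, Fin.mk_one, Fin.reduceFinMk, Pi.smul_apply,
      smul_eq_mul, Matrix.cons_val]
  · linear_combination (x * (x - v - z) * (z - v) * (3 * y + v)) * hc
  all_goals ring

section Factorizations

variable (x y z v : A)

theorem two_mul_sub_quadric :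
    2 * (x * (x - v - z)) - quadric x z v = -(v * (v + z)) := by
  unfold quadric
  ring

theorem two_mul_mul_sub_quadric_mul_add :
    2 * (x * (x - v - z)) * (z - v) - quadric x z v * (z + v) = -(v * (2 * x - v - z) ^ 2) := by
  unfold quadric
  ring

theorem two_mul_mul_sub_quadric_mul_two_mul :
    2 * (x * (x - v - z)) * (z - v) - quadric x z v * (2 * z) =
      -(2 * ((z + v) * (x - z) * (x - v))) := by
  unfold quadric
  ring

theorem twoEndo_zero_sub_two :
    twoEndo x y z v 0 - twoEndo x y z v 2 = -((3 * y + v) * v * (2 * x - v - z) ^ 2) := by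
  simp only [twoEndo, Matrix.cons_val]
  linear_combination (3 * y + v) * two_mul_mul_sub_quadric_mul_add x z v

theorem twoEndo_zero_sub_three :
    twoEndo x y z v 0 - twoEndo x y z v 3 = -((3 * y + v) * (z - v) * v * (v + z)) := by
  simp only [twoEndo, Matrix.cons_val]
  linear_combination (3 * y + v) * (z - v) * two_mul_sub_quadric x z v

theorem twoEndo_zero_sub_two_sub_three :
    twoEndo x y z v 0 - twoEndo x y z v 2 - twoEndo x y z v 3 =
      -(2 * ((3 * y + v) * (z + v) * (x - z) * (x - v))) := by
  simp only [twoEndo, Matrix.cons_val]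
  linear_combination (3 * y + v) * two_mul_mul_sub_quadric_mul_two_mul x z v

theorem twoEndo_one_sub_two :
    twoEndo x y z v 1 - twoEndo x y z v 2 = -(2 * (quadric x z v * v * (y + v + 2 * z))) := by
  simp only [twoEndo, Matrix.cons_val]
  ring

theorem twoEndo_one_sub_three :
    twoEndo x y z v 1 - twoEndo x y z v 3 = 4 * (quadric x z v * v * (y - z)) := by
  simp only [twoEndo, Matrix.cons_val]
  ring

theorem twoEndo_one_add_three_add_two_mul_two :
    twoEndo x y z v 1 + twoEndo x y z v 3 + 2 * twoEndo x y z v 2 =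
      4 * (quadric x z v * y * (3 * z + v)) := by
  simp only [twoEndo, Matrix.cons_val]
  ring

theorem octic_twoEndo :
    octic (twoEndo x y z v) = 2 * (8 * multiplier 1 x y z v) ^ 2 * octic ![x, y, z, v] := by
  have h₀ : twoEndo x y z v 0 = 2 * (x * (x - v - z)) * (z - v) * (3 * y + v) := rfl
  have h₁ : twoEndo x y z v 1 = quadric x z v * (3 * z + v) * (y - v) := rfl
  rw [octic, twoEndo_zero_sub_two_sub_three, twoEndo_zero_sub_two, twoEndo_zero_sub_three,
    twoEndo_one_sub_two, twoEndo_one_sub_three, twoEndo_one_add_three_add_two_mul_two, h₀, h₁]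
  simp only [octic, multiplier, Matrix.cons_val]
  ring

end Factorizations

theorem octic_endo {c s : A} (hc : 2 * c = 1) (hs : s ^ 2 = 2) (x y z v : A) :
    octic (endo c x y z v) = multiplier (s * c) x y z v ^ 2 * octic ![x, y, z, v] := by
  have hconst : c ^ 8 * (2 * 8 ^ 2) = (s * c) ^ 2 := by
    calc
      c ^ 8 * (2 * 8 ^ 2) = 2 * c ^ 2 * (2 * c) ^ 6 := by ring
      _ = (s * c) ^ 2 := by rw [hc, one_pow, mul_one, mul_pow, hs]
  calc
    octic (endo c x y z v) = octic (c • twoEndo x y z v) := by rw [smul_twoEndo hc]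
    _ = c ^ 8 * (2 * (8 * multiplier 1 x y z v) ^ 2 * octic ![x, y, z, v]) := by
      rw [octic_smul, octic_twoEndo]
    _ = multiplier (s * c) x y z v ^ 2 * octic ![x, y, z, v] := by
      rw [multiplier_eq_mul_multiplier_one (s * c), mul_pow (s * c), ← hconst]
      ring

end CommRing

end DoubleOctic

open DoubleOctic MvPolynomial in
theorem double_octic_endomorphism_identity_general {R : Type*} [CommRing R] {c s : R}
    (hc : 2 * c = 1) (hs : s ^ 2 = 2) :
    aeval (endo (C c) (X 0) (X 1) (X 2) (X 3)) (octic X : MvPolynomial (Fin 4) R) =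
      multiplier (C (s * c)) (X 0) (X 1) (X 2) (X 3) ^ 2 * octic X := by
  have hcC : 2 * (C c : MvPolynomial (Fin 4) R) = 1 := by
    rw [← map_ofNat C 2, ← C_mul, hc, C_1]
  have hsC : (C s : MvPolynomial (Fin 4) R) ^ 2 = 2 := by
    rw [← C_pow, hs, map_ofNat]
  rw [aeval_octic_X, C_mul]
  exact octic_endo hcC hsC (X 0) (X 1) (X 2) (X 3)

open MvPolynomial in
/-- The identity `B(P₁, P₂, P₃, P₄) = P_u² · B(x, y, z, v)` in `K[x,y,z,v]`,
expressing that the rational map `Ψ`, defined over `ℚ(√2)`, maps the double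
octic `u² = B(x,y,z,v)` to itself. -/
theorem double_octic_endomorphism_identity
    (K : Type) [Field K] (h2 : (2 : K) ≠ 0) (s : K) (hs : s ^ 2 = 2)
    (x y z v B Q P₁ P₂ P₃ P₄ Pu : MvPolynomial (Fin 4) K)
    (hx : x = X 0) (hy : y = X 1) (hz : z = X 2) (hv : v = X 3)
    (hB : B = x * (x - z) * (x - v) * (x - z - v)
            * y * (y - z) * (y - v) * (y + v + 2*z))
    (hQ : Q = v^2 - 2*x*v + z*v + 2*x^2 - 2*x*z)
    (hP₁ : P₁ = x * (x - v - z) * (z - v) * (3*y + v))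
    (hP₂ : P₂ = C (1/2 : K) * (3*z + v) * Q * (y - v))
    (hP₃ : P₃ = C (1/2 : K) * Q * (3*y + v) * (z + v))
    (hP₄ : P₄ = C (1/2 : K) * Q * (3*y + v) * (z - v))
    (hPu : Pu = C (s/2) * (v - z) * (v + 3*y)^2 * v^2
              * (2*x - v - z) * (v + z) * (3*z + v) * Q^2) :
    aeval ![P₁, P₂, P₃, P₄] B = Pu ^ 2 * B := by
  rw [← mul_one_div] at hPu
  subst hx hy hz hv hB hQ hP₁ hP₂ hP₃ hP₄ hPu
  exact double_octic_endomorphism_identity_general (mul_one_div_cancel h2) hs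
end

section
/- Let R be a commutative ring containing an element ζ with ζ² + ζ + 1 = 0. In R[x,y,z,v] define f = x·y·z·v·(x+y)·(x+y+z−v)·(ζx−y+ζz)·(y−ζz−v) and let f^σ = x·y·z·v·(x+y)·(x+y+z−v)·(ζ̄x−y+ζ̄z)·(y−ζ̄z−v) where ζ̄ = −1−ζ. Then substituting X = ζx, Y = −ζx−ζy, Z = −(ζ+1)x−y−(ζ+1)z, V = −(ζ+1)(x+y+z−v) into f yields f(X, Y, Z, V) = − f^σ(x, y, z, v) as an identity in R[x,y,z,v]. -/
/-!
The substitution carries each of the eight planes of the octic to a unit multiple of a plane of the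
conjugate octic. With `ζ'` the other root `-1 - ζ` of `t ^ 2 + t + 1`, the eight units are
`ζ, -ζ, 1, ζ', -ζ, ζ', 1, -ζ'`, and since `ζ * ζ' = 1` their product is `-(ζ * ζ') ^ 3 = -1`.
-/

section

variable {S : Type*} [CommRing S]

/-- The octic form with parameter `ζ` whose double cover is the double octic, evaluated at
`p = (x, y, z, v)`. The octic polynomial itself is the value at the point of indeterminates. -/
def doubleOctic (ζ : S) (p : Fin 4 → S) : S :=
  p 0 * p 1 * p 2 * p 3 * (p 0 + p 1) * (p 0 + p 1 + p 2 - p 3)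
    * (ζ * p 0 - p 1 + ζ * p 2) * (p 1 - ζ * p 2 - p 3)

/-- The linear change of coordinates underlying the isomorphism between the double octic and its
Galois conjugate. -/
def conjugatingMap (ζ : S) (p : Fin 4 → S) : Fin 4 → S :=
  ![ζ * p 0,
    -(ζ * p 0) - ζ * p 1,
    -((ζ + 1) * p 0) - p 1 - (ζ + 1) * p 2,
    -(ζ + 1) * (p 0 + p 1 + p 2 - p 3)]

open MvPolynomial in
theorem aeval_doubleOctic {R : Type*} [CommRing R] [Algebra R S] (ζ : R) (p : Fin 4 → S) :
    aeval p (doubleOctic (C ζ) X) = doubleOctic (algebraMap R S ζ) p := by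
  simp only [doubleOctic, map_mul, map_add, map_sub, aeval_X, aeval_C]

theorem double_octic_conjugate_identity_general {ζ ζ' : S} (hsum : ζ + ζ' = -1)
    (hprod : ζ * ζ' = 1) (p : Fin 4 → S) :
    doubleOctic ζ (conjugatingMap ζ p) = -doubleOctic ζ' p := by
  set q := conjugatingMap ζ p
  have hX : q 0 = ζ * p 0 := rfl
  have hY : q 1 = -ζ * (p 0 + p 1) := by
    change -(ζ * p 0) - ζ * p 1 = _
    ring
  have hZ : q 2 = ζ' * p 0 - p 1 + ζ' * p 2 := by
    change -((ζ + 1) * p 0) - p 1 - (ζ + 1) * p 2 = _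
    linear_combination -(p 0 + p 2) * hsum
  have hV : q 3 = ζ' * (p 0 + p 1 + p 2 - p 3) := by
    change -(ζ + 1) * (p 0 + p 1 + p 2 - p 3) = _
    linear_combination -(p 0 + p 1 + p 2 - p 3) * hsum
  have hXY : q 0 + q 1 = -ζ * p 1 := by
    rw [hX, hY]
    ring
  have hXYZV : q 0 + q 1 + q 2 - q 3 = ζ' * p 3 := by
    rw [hXY, hZ, hV]
    linear_combination -p 1 * hsum
  have hXYZ : ζ * q 0 - q 1 + ζ * q 2 = p 2 := by
    rw [hX, hY, hZ]
    linear_combination ζ * p 0 * hsum + p 2 * hprod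
  have hYZV : q 1 - ζ * q 2 - q 3 = -ζ' * (p 1 - ζ' * p 2 - p 3) := by
    rw [hY, hZ, hV]
    linear_combination -(p 0 + ζ' * p 2) * hsum - p 0 * hprod
  calc doubleOctic ζ q
      = -(ζ * ζ') ^ 3 * doubleOctic ζ' p := by
        rw [doubleOctic, hXYZV, hXYZ, hYZV, hXY, hX, hY, hZ, hV, doubleOctic]
        ring
    _ = -doubleOctic ζ' p := by rw [hprod, one_pow, neg_one_mul]

end

open MvPolynomial in
/-- In `R[x,y,z,v]` with `ζ² + ζ + 1 = 0`, substituting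
`X = ζx, Y = -ζx - ζy, Z = -(ζ+1)x - y - (ζ+1)z, V = -(ζ+1)(x+y+z-v)` into
the octic `f` defining the double octic `Z` yields `-f^σ`, where `f^σ` is the
Galois conjugate octic (with `ζ` replaced by `ζ̄ = -1 - ζ`). -/
theorem double_octic_conjugate_identity
    (R : Type) [CommRing R] (ζ : R) (hζ : ζ ^ 2 + ζ + 1 = 0)
    (x y z v f fσ : MvPolynomial (Fin 4) R)
    (hx : x = X 0) (hy : y = X 1) (hz : z = X 2) (hv : v = X 3)
    (hf : f = x * y * z * v * (x + y) * (x + y + z - v)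
            * (C ζ * x - y + C ζ * z) * (y - C ζ * z - v))
    (hfσ : fσ = x * y * z * v * (x + y) * (x + y + z - v)
            * (C (-1 - ζ) * x - y + C (-1 - ζ) * z)
            * (y - C (-1 - ζ) * z - v)) :
    aeval ![C ζ * x,
           -(C ζ * x) - C ζ * y,
           -(C (ζ + 1) * x) - y - C (ζ + 1) * z,
           -(C (ζ + 1)) * (x + y + z - v)] f = -fσ := by
  have hsum : (C ζ + C (-1 - ζ) : MvPolynomial (Fin 4) R) = -1 := by
    rw [← C_add, add_sub_cancel, C_neg, C_1]
  have hprod : (C ζ * C (-1 - ζ) : MvPolynomial (Fin 4) R) = 1 := by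
    rw [← C_mul, ← C_1]
    exact congrArg C (by linear_combination -hζ)
  subst hx hy hz hv hf hfσ
  rw [C_add, C_1]
  calc aeval (conjugatingMap (C ζ) X) (doubleOctic (C ζ) X)
      = doubleOctic (C ζ) (conjugatingMap (C ζ) X) := aeval_doubleOctic ζ _
    _ = -doubleOctic (C (-1 - ζ)) X := double_octic_conjugate_identity_general hsum hprod X
end

section
/- Let F be a field with 9 elements and let φ ∈ F satisfy φ² + φ = 1. Define f_Y(x,y,z,v) = x·y·z·v·(x+y+z)·(φy−z+v)·(x+y+φv)·((1−φ)x+y−φz+φv). Then the number of tuples (x,y,z,v,u) ∈ F⁵ with (x,y,z,v) ≠ (0,0,0,0) and u² = f_Y(x,y,z,v) equals 6520 = 815·8. -/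
/-- The octic defining the singular double cover `Y′ : u² = f_Y(x,y,z,v)`
whose crepant resolution is the rigid Calabi–Yau threefold `Y` over `ℚ(√5)`
(with `φ = (-1+√5)/2`). -/
def fY {F : Type} [CommRing F] (φ x y z v : F) : F :=
  x * y * z * v * (x + y + z) * (φ*y - z + v) * (x + y + φ*v)
    * ((1 - φ)*x + y - φ*z + φ*v)

/-!
Over a field `F` of odd order `q`, the equation `u² = c` has `1 + χ(c)` solutions, `χ` being the
quadratic character. Since `f_Y` has even degree, `χ ∘ f_Y` is constant on lines through the origin,
and since `x ∣ f_Y` it vanishes on the plane `x = 0`; hence the point count is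
`(q - 1) · (#ℙ³(F) + ∑ χ(f_Y(1, y, z, v)))`. For `q = 9` we have `#ℙ³(F) = 820`, and the character
sum is evaluated to `-5` in the explicit model `𝔽₃[ω]`, `ω² = 1 - ω`, of the pair `(F, φ)`. This
gives `n₉ = 820 - 5 = 815`.
-/

open QuadraticAlgebra
open scoped Finset

section QuadraticChar

variable {F : Type*} [Field F] [Fintype F] [DecidableEq F]

theorem quadraticChar_mulEquiv {K : Type*} [Field K] [Fintype K] [DecidableEq K] (e : K ≃* F)
    (a : K) : quadraticChar F (e a) = quadraticChar K a := by
  have isSquare_iff : IsSquare (e a) ↔ IsSquare a :=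
    ⟨fun h => by simpa only [e.symm_apply_apply] using h.map e.symm, fun h => h.map e⟩
  simp only [quadraticChar_apply, quadraticCharFun, map_eq_zero_iff e e.injective, isSquare_iff]

theorem natCard_sq_eq {α : Type*} (hF : ringChar F ≠ 2) (s : Finset α) (f : α → F) :
    (Nat.card {p : α × F | p.1 ∈ s ∧ p.2 ^ 2 = f p.1} : ℤ) =
      #s + ∑ a ∈ s, quadraticChar F (f a) := by
  have fibered : {p : α × F | p.1 ∈ s ∧ p.2 ^ 2 = f p.1} ≃
      s.sigma fun a => {u : F | u ^ 2 = f a}.toFinset :=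
    { toFun := fun ⟨(a, u), h⟩ => ⟨⟨a, u⟩, by simpa using h⟩
      invFun := fun ⟨⟨a, u⟩, h⟩ => ⟨(a, u), by simpa using h⟩ }
  rw [Nat.card_congr fibered, Nat.card_eq_fintype_card, Fintype.card_coe, Finset.card_sigma,
    Nat.cast_sum, Finset.card_eq_sum_ones, Nat.cast_sum, ← Finset.sum_add_distrib]
  refine Finset.sum_congr rfl fun a _ => ?_
  rw [quadraticChar_card_sqrts hF, Nat.cast_one, add_comm]

theorem sum_quadraticChar_of_homogeneous {V : Type*} [Fintype V] [MulAction Fˣ V] {f : F × V → F}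
    {n : ℕ} (hn : Even n) (hf : ∀ (c : Fˣ) (w : F × V), f (c • w) = c ^ n * f w)
    (hf₀ : ∀ p, f (0, p) = 0) :
    ∑ w, quadraticChar F (f w) = (Fintype.card F - 1) * ∑ p, quadraticChar F (f (1, p)) := by
  have slice (x : F) : ∑ p, quadraticChar F (f (x, p)) =
      if x = 0 then 0 else ∑ p, quadraticChar F (f (1, p)) := by
    split_ifs with hx
    · simp [hx, hf₀]
    let c : Fˣ := Units.mk0 x hx
    rw [← Equiv.sum_comp (MulAction.toPerm c)]
    refine Finset.sum_congr rfl fun p _ => ?_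
    have scale : (x, c • p) = c • ((1 : F), p) := by simp [c, Units.smul_def]
    obtain ⟨k, rfl⟩ := hn
    rw [MulAction.toPerm_apply, scale, hf, map_mul, ← two_mul, pow_mul',
      quadraticChar_sq_one' (pow_ne_zero k c.ne_zero), one_mul]
  rw [Fintype.sum_prod_type, Finset.sum_congr rfl fun x _ => slice x,
    ← Finset.sum_erase_add _ _ (Finset.mem_univ 0), if_pos rfl, add_zero,
    Finset.sum_congr rfl fun x hx => if_neg (Finset.ne_of_mem_erase hx), Finset.sum_const,
    Finset.card_erase_of_mem (Finset.mem_univ 0), Finset.card_univ, nsmul_eq_mul,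
    Nat.cast_pred Fintype.card_pos]

end QuadraticChar

section DoubleOctic

theorem map_fY {F K : Type} [CommRing F] [CommRing K] (e : K →+* F) (φ x y z v : K) :
    e (fY φ x y z v) = fY (e φ) (e x) (e y) (e z) (e v) := by
  simp only [fY, map_mul, map_add, map_sub, map_one]

theorem fY_mul_left {R : Type} [CommRing R] (φ c x y z v : R) :
    fY φ (c * x) (c * y) (c * z) (c * v) = c ^ 8 * fY φ x y z v := by
  unfold fY
  ring

theorem fY_zero_left {R : Type} [CommRing R] (φ y z v : R) : fY φ 0 y z v = 0 := by
  simp only [fY, zero_mul]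

variable {F : Type} [Field F] [Fintype F] [DecidableEq F]

/-- The sum of the quadratic character of `f_Y` over the affine chart `x = 1` of `ℙ³(F)`. -/
def fYCharSum (φ : F) : ℤ :=
  ∑ p : F × F × F, quadraticChar F (fY φ 1 p.1 p.2.1 p.2.2)

theorem fYCharSum_ringEquiv {K : Type} [Field K] [Fintype K] [DecidableEq K] (e : K ≃+* F)
    (φ : K) : fYCharSum (e φ) = fYCharSum φ := by
  let e₃ : K × K × K ≃ F × F × F := e.toEquiv.prodCongr (e.toEquiv.prodCongr e.toEquiv)
  refine (Fintype.sum_equiv e₃ _ _ fun p => ?_).symm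
  have map_value := map_fY (e : K →+* F) φ 1 p.1 p.2.1 p.2.2
  rw [map_one] at map_value
  exact (quadraticChar_mulEquiv e.toMulEquiv _).symm.trans (congrArg _ map_value)

theorem sum_quadraticChar_fY (φ : F) :
    ∑ w : F × F × F × F, quadraticChar F (fY φ w.1 w.2.1 w.2.2.1 w.2.2.2) =
      (Fintype.card F - 1) * fYCharSum φ := by
  have even_degree : Even 8 := by decide
  refine sum_quadraticChar_of_homogeneous (V := F × F × F)
    (f := fun w => fY φ w.1 w.2.1 w.2.2.1 w.2.2.2) even_degree (fun c w => ?_) fun p => ?_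
  · simp only [Prod.smul_fst, Prod.smul_snd, Units.smul_def, smul_eq_mul, fY_mul_left]
  · exact fY_zero_left φ p.1 p.2.1 p.2.2

theorem natCard_fY (hF : ringChar F ≠ 2) (φ : F) :
    (Nat.card {p : F × F × F × F × F |
      (p.1, p.2.1, p.2.2.1, p.2.2.2.1) ≠ (0, 0, 0, 0) ∧
      p.2.2.2.2 ^ 2 = fY φ p.1 p.2.1 p.2.2.1 p.2.2.2.1} : ℤ) =
    (Fintype.card F - 1) * (∑ i ∈ Finset.range 4, (Fintype.card F : ℤ) ^ i + fYCharSum φ) := by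
  let e : (F × F × F × F) × F ≃ F × F × F × F × F :=
    { toFun p := (p.1.1, p.1.2.1, p.1.2.2.1, p.1.2.2.2, p.2)
      invFun p := ((p.1, p.2.1, p.2.2.1, p.2.2.2.1), p.2.2.2.2) }
  let f : F × F × F × F → F := fun w => fY φ w.1 w.2.1 w.2.2.1 w.2.2.2
  have hf₀ : quadraticChar F (f 0) = 0 := by simp [f, fY_zero_left]
  have card_punctured : (#(Finset.univ.erase (0 : F × F × F × F)) : ℤ) =
      (Fintype.card F - 1) * ∑ i ∈ Finset.range 4, (Fintype.card F : ℤ) ^ i := by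
    rw [mul_geom_sum, Finset.card_erase_of_mem (Finset.mem_univ _), Finset.card_univ,
      Nat.cast_pred Fintype.card_pos]
    simp only [Fintype.card_prod]
    push_cast
    ring
  rw [← Nat.card_congr (e.subtypeEquiv fun p => by simp [e, f, Prod.ext_iff] :
      {p : (F × F × F × F) × F | p.1 ∈ Finset.univ.erase 0 ∧ p.2 ^ 2 = f p.1} ≃ _),
    natCard_sq_eq hF, Finset.sum_erase (f := fun w => quadraticChar F (f w)) _ hf₀,
    sum_quadraticChar_fY, card_punctured, mul_add]

end DoubleOctic

section QuadraticAlgebra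

instance {R : Type*} [Fintype R] (a b : R) : Fintype (QuadraticAlgebra R a b) :=
  .ofEquiv _ (equivProd a b).symm

/-- A quadratic extension `L / K` containing a root `u` of `X² - bX - a` is `K[ω]`, `ω² = a + bω`,
by the isomorphism sending `ω` to `u`. -/
noncomputable def quadraticAlgebraEquiv {K L : Type*} [Field K] [Field L] [Algebra K L] {a b : K}
    [Fact (∀ r, r ^ 2 ≠ a + b * r)] (h : Module.finrank K L = 2)
    (u : {u : L // u * u = a • 1 + b • u}) : QuadraticAlgebra K a b ≃ₐ[K] L :=
  have : FiniteDimensional K L := .of_finrank_pos (by lia)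
  .ofBijective (lift u) <| by
    have hinj : Function.Injective (lift u) := (lift u : QuadraticAlgebra K a b →+* L).injective
    have hdim : Module.finrank K (QuadraticAlgebra K a b) = Module.finrank K L :=
      (finrank_eq_two a b).trans h.symm
    exact ⟨hinj, (LinearMap.injective_iff_surjective_of_finrank_eq_finrank
      (f := (lift u).toLinearMap) hdim).1 hinj⟩

end QuadraticAlgebra

section Model

/-- The model `𝔽₃[ω]`, `ω² = 1 - ω`, of the field with nine elements, in which `ω` plays the role
of `φ`. -/
abbrev F9 : Type := QuadraticAlgebra (ZMod 3) 1 (-1)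

instance : Fact (∀ r : ZMod 3, r ^ 2 ≠ 1 + -1 * r) := ⟨by decide⟩

theorem fYCharSum_omega : fYCharSum (ω : F9) = -5 := by
  decide +kernel

theorem exists_ringEquiv_F9 {F : Type*} [Field F] [Fintype F] (hF : Fintype.card F = 9) {φ : F}
    (hφ : φ ^ 2 + φ = 1) : ∃ e : F9 ≃+* F, e ω = φ := by
  have : CharP F 3 := charP_of_card_eq_prime_pow (f := 2) hF
  let : Algebra (ZMod 3) F := ZMod.algebra F 3
  have finrank_eq : Module.finrank (ZMod 3) F = 2 := by
    have h := Module.card_eq_pow_finrank (K := ZMod 3) (V := F)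
    rw [hF, ZMod.card] at h
    exact (Nat.pow_right_injective (by lia : 2 ≤ 3) h).symm
  have hu : φ * φ = (1 : ZMod 3) • 1 + (-1 : ZMod 3) • φ := by
    rw [one_smul, neg_one_smul]
    linear_combination hφ
  exact ⟨(quadraticAlgebraEquiv finrank_eq ⟨φ, hu⟩).toRingEquiv, by
    simp [quadraticAlgebraEquiv, lift]⟩

end Model

/-- Point count over `𝔽₉`: the number of tuples `(x,y,z,v,u) ∈ F⁵` with
`(x,y,z,v) ≠ (0,0,0,0)` and `u² = f_Y(x,y,z,v)` equals `6520 = 815·8`. -/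
theorem point_count_fY_9 (F : Type) [Field F] [Fintype F]
    (hF : Fintype.card F = 9) (φ : F) (hφ : φ ^ 2 + φ = 1) :
    Nat.card {p : F × F × F × F × F |
      (p.1, p.2.1, p.2.2.1, p.2.2.2.1) ≠ (0, 0, 0, 0) ∧
      p.2.2.2.2 ^ 2 = fY φ p.1 p.2.1 p.2.2.1 p.2.2.2.1} = 6520 := by
  classical
  have : CharP F 3 := charP_of_card_eq_prime_pow (f := 2) hF
  have hchar : ringChar F ≠ 2 := by simp [ringChar.eq F 3]
  obtain ⟨e, rfl⟩ := exists_ringEquiv_F9 hF hφ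
  have hsum : fYCharSum (e ω) = -5 := by rw [fYCharSum_ringEquiv, fYCharSum_omega]
  zify
  rw [natCard_fY hchar, hF, hsum]
  norm_num [Finset.sum_range_succ]
end

section
/- Let F be a field with 121 elements and let φ be the image of 3 under the canonical map ℤ → F (so φ² + φ = 1 in F). Define f_Y(x,y,z,v) = x·y·z·v·(x+y+z)·(φy−z+v)·(x+y+φv)·((1−φ)x+y−φz+φv). Then the number of tuples (x,y,z,v,u) ∈ F⁵ with (x,y,z,v) ≠ (0,0,0,0) and u² = f_Y(x,y,z,v) equals 214115640 = 1784297·120. -/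
/-! In the coordinates `s = x + y`, `w = z - v` the octic splits, for fixed `(s, w)`, as a quartic
in `x` times a quartic in `z`: the pencil `(s : w)` fibres `Y′` in quotients of products of two
genus one curves. Hence the quadratic character sum of `fY` over `F⁴` is a sum over `(s, w)` of
products of two one-variable sums. Such a product depends only on the point `(s : w)` of the
projective line, and so only `q + 1` products and the one over `(0, 0)` have to be evaluated. For
`q = 121` this is done in `𝔽₁₁[i]`, where Euler's criterion applied to norms gives the quadratic
character. -/

open Finset

section QuadraticCharacter

variable {F : Type*} [Field F] [Fintype F] [DecidableEq F]

lemma card_sigma_sq_eq {ι : Type*} [Fintype ι] (hF : ringChar F ≠ 2) (f : ι → F) :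
    (Nat.card (Σ i, {u : F // u ^ 2 = f i}) : ℤ) =
      Fintype.card ι + ∑ i, quadraticChar F (f i) := by
  have card_sqrts (a : F) : (Nat.card {u : F // u ^ 2 = a} : ℤ) = quadraticChar F a + 1 := by
    rw [← quadraticChar_card_sqrts hF a, Set.toFinset_card, ← Nat.card_eq_fintype_card]
    rfl
  rw [Nat.card_sigma, Nat.cast_sum, sum_congr rfl fun i _ ↦ card_sqrts (f i), sum_add_distrib,
    add_comm, sum_const, card_univ, nsmul_one]

lemma quadraticChar_pow_mul_of_even {n : ℕ} (hn : Even n) {c : F} (hc : c ≠ 0) (a : F) :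
    quadraticChar F (c ^ n * a) = quadraticChar F a := by
  obtain ⟨k, rfl⟩ := hn
  rw [map_mul, ← two_mul, mul_comm 2 k, pow_mul, quadraticChar_sq_one' (pow_ne_zero k hc), one_mul]

lemma quadraticChar_eq_quadraticChar_norm {K : Type*} [Field K] [Fintype K] [DecidableEq K]
    [Algebra K F] (hF : ringChar F ≠ 2) (x : F) :
    quadraticChar F x = quadraticChar K (Algebra.norm K x) := by
  refine (quadraticChar_isQuadratic F).eq_of_eq_coe (quadraticChar_isQuadratic K) hF ?_
  have hK : ringChar K ≠ 2 := by rwa [← Algebra.ringChar_eq K F] at hF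
  have norm_coe : ((quadraticChar K (Algebra.norm K x) : ℤ) : F) =
      (x ^ ((Fintype.card F - 1) / (Fintype.card K - 1))) ^ (Fintype.card K / 2) := by
    have := congrArg (algebraMap K F) (quadraticChar_eq_pow_of_char_ne_two' hK (Algebra.norm K x))
    rwa [map_intCast, map_pow, FiniteField.algebraMap_norm_eq_pow, Nat.card_eq_fintype_card,
      Nat.card_eq_fintype_card] at this
  have exponent : (Fintype.card F - 1) / (Fintype.card K - 1) * (Fintype.card K / 2) =
      Fintype.card F / 2 := by
    obtain ⟨m, hm⟩ : Fintype.card K - 1 ∣ Fintype.card F - 1 := by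
      rw [Module.card_eq_pow_finrank (K := K) (V := F)]
      exact Nat.sub_one_dvd_pow_sub_one _ _
    obtain ⟨k, hk⟩ := Nat.odd_iff.2 (FiniteField.odd_card_of_char_ne_two hK)
    have k_pos : 0 < 2 * k := by have := Fintype.one_lt_card (α := K); omega
    have card_F : Fintype.card F = 2 * (k * m) + 1 := by
      rw [← Nat.sub_add_cancel Fintype.card_pos, hm, hk, Nat.add_sub_cancel, mul_assoc]
    have half_odd (j : ℕ) : (2 * j + 1) / 2 = j := by omega
    rw [hm, hk, card_F, Nat.add_sub_cancel, Nat.mul_div_cancel_left _ k_pos, half_odd, half_odd,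
      mul_comm]
  rw [quadraticChar_eq_pow_of_char_ne_two' hF, norm_coe, ← pow_mul, exponent]

/-- The quadratic character of `n` modulo an odd prime `p`, evaluated by Euler's criterion: the
residue of `n ^ (p / 2)` is `0`, `1` or `p - 1`, which the shift by one before reduction turns into
`1`, `2` or `0`. -/
def eulerSign (p n : ℕ) : ℤ :=
  ((n ^ (p / 2) + 1) % p : ℕ) - 1

lemma legendreSym_natCast_eq_eulerSign {p : ℕ} [Fact p.Prime] (hp : p ≠ 2) (n : ℕ) :
    legendreSym p n = eulerSign p n := by
  have euler : ((n ^ (p / 2) + 1 : ℕ) : ℤ) % p = (legendreSym p n + 1) % p := by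
    rw [← ZMod.intCast_eq_intCast_iff']
    push_cast
    rw [legendreSym.eq_pow, Int.cast_natCast]
  have three_le : 3 ≤ p := (Fact.out : p.Prime).two_le.lt_of_ne' hp
  have range : 0 ≤ legendreSym p n + 1 ∧ legendreSym p n + 1 < p := by
    rcases quadraticChar_isQuadratic (ZMod p) (n : ℤ) with h | h | h <;>
      rw [legendreSym, h] <;> omega
  rw [Int.emod_eq_of_lt range.1 range.2] at euler
  rw [eulerSign, Int.natCast_mod, euler, add_sub_cancel_right]

lemma eulerSign_mul {p : ℕ} [Fact p.Prime] (hp : p ≠ 2) (m n : ℕ) :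
    eulerSign p (m * n) = eulerSign p m * eulerSign p n := by
  simp only [← legendreSym_natCast_eq_eulerSign hp, Nat.cast_mul, legendreSym.mul]

end QuadraticCharacter

section Homogeneous

variable {F : Type*} [Field F] [Fintype F]

lemma sum_eq_add_of_forall_ne_zero {R : Type*} [Ring R] {f : F → R} {c : R}
    (hf : ∀ x ≠ 0, f x = c) : ∑ x, f x = f 0 + (Fintype.card F - 1) * c := by
  classical
  rw [← add_sum_erase _ _ (mem_univ 0), sum_congr rfl fun x hx ↦ hf x (ne_of_mem_erase hx),
    sum_const, card_erase_of_mem (mem_univ 0), card_univ, nsmul_eq_mul,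
    Nat.cast_pred Fintype.card_pos]

lemma sum_sum_eq_of_mul_left_invariant {R : Type*} [Ring R] (G : F → F → R)
    (hG : ∀ c ≠ 0, ∀ s w, G (c * s) (c * w) = G s w) :
    ∑ s, ∑ w, G s w = G 0 0 + (Fintype.card F - 1) * (G 0 1 + ∑ w, G 1 w) := by
  have s_eq_zero : ∑ w, G 0 w = G 0 0 + (Fintype.card F - 1) * G 0 1 :=
    sum_eq_add_of_forall_ne_zero fun w hw ↦ by simpa using hG w hw 0 1
  have s_ne_zero : ∀ s ≠ 0, ∑ w, G s w = ∑ w, G 1 w := fun s hs ↦ by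
    rw [← Equiv.sum_comp (Equiv.mulLeft₀ s hs)]
    exact sum_congr rfl fun w _ ↦ by simpa using hG s hs 1 w
  rw [sum_eq_add_of_forall_ne_zero s_ne_zero, s_eq_zero, add_assoc, mul_add]

end Homogeneous

section Fibration

section CommRing

variable {F : Type} [CommRing F]

/-- The factor of the octic that depends on `x` in the coordinates of `fiberCoordinates`. -/
def xyQuartic (φ s w x : F) : F :=
  x * (s - x) * (φ * (s - x) - w) * (s - φ * (x + w))

/-- The factor of the octic that depends on `z` in the coordinates of `fiberCoordinates`. -/
def zvQuartic (φ s w z : F) : F :=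
  z * (z - w) * (s + z) * (s + φ * (z - w))

/-- The coordinates `s = x + y`, `w = z - v`, `x`, `z` on `F⁴`, in which the octic becomes a product
of two quartics. -/
def fiberCoordinates : F × F × F × F ≃ F × F × F × F where
  toFun := fun ⟨s, w, x, z⟩ ↦ (x, s - x, z, z - w)
  invFun := fun ⟨x, y, z, v⟩ ↦ (x + y, z - v, x, z)
  left_inv := by rintro ⟨s, w, x, z⟩; simp
  right_inv := by rintro ⟨x, y, z, v⟩; simp

/-- The octic on affine space `F⁴`. -/
def affineOctic (φ : F) (p : F × F × F × F) : F :=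
  fY φ p.1 p.2.1 p.2.2.1 p.2.2.2

lemma affineOctic_fiberCoordinates (φ s w x z : F) :
    affineOctic φ (fiberCoordinates (s, w, x, z)) = xyQuartic φ s w x * zvQuartic φ s w z := by
  simp only [affineOctic, fiberCoordinates, Equiv.coe_fn_mk, fY, xyQuartic, zvQuartic]
  ring

end CommRing

variable {F : Type} [Field F] [Fintype F] [DecidableEq F]

/-- The quadratic character sum of the quartic `Q` over the fibre at `(s, w)`. -/
def fiberSum (Q : F → F → F → F) (s w : F) : ℤ :=
  ∑ t, quadraticChar F (Q s w t)

lemma fiberSum_mul_left {Q : F → F → F → F} {n : ℕ} (hn : Even n)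
    (hQ : ∀ c s w t, Q (c * s) (c * w) (c * t) = c ^ n * Q s w t) {c : F} (hc : c ≠ 0) (s w : F) :
    fiberSum Q (c * s) (c * w) = fiberSum Q s w := by
  unfold fiberSum
  rw [← Equiv.sum_comp (Equiv.mulLeft₀ c hc)]
  simp only [Equiv.mulLeft₀_apply, hQ, quadraticChar_pow_mul_of_even hn hc]

/-- The contribution of the fibre at `(s, w)` to the quadratic character sum of the octic. -/
def fiberWeight (φ s w : F) : ℤ :=
  fiberSum (xyQuartic φ) s w * fiberSum (zvQuartic φ) s w

lemma fiberWeight_mul_left (φ : F) {c : F} (hc : c ≠ 0) (s w : F) :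
    fiberWeight φ (c * s) (c * w) = fiberWeight φ s w := by
  unfold fiberWeight
  have even_four : Even 4 := by decide
  rw [fiberSum_mul_left even_four _ hc, fiberSum_mul_left even_four _ hc]
  · intros; unfold zvQuartic; ring
  · intros; unfold xyQuartic; ring

lemma sum_quadraticChar_affineOctic (φ : F) :
    ∑ p, quadraticChar F (affineOctic φ p) = ∑ s, ∑ w, fiberWeight φ s w := by
  rw [← fiberCoordinates.sum_comp]
  simp only [Fintype.sum_prod_type, affineOctic_fiberCoordinates, map_mul,
    ← sum_mul_sum, fiberWeight, fiberSum]

end Fibration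

section Cone

/-- The affine cone over the double cover `u² = fY`, without the points lying over the origin of
`F⁴`. Since `λ` scales `u` by `λ⁴`, each point of the double cover corresponds to `q - 1` points of
this set. -/
def puncturedCone {F : Type} [CommRing F] (φ : F) : Set (F × F × F × F × F) :=
  {p | (p.1, p.2.1, p.2.2.1, p.2.2.2.1) ≠ (0, 0, 0, 0) ∧
    p.2.2.2.2 ^ 2 = fY φ p.1 p.2.1 p.2.2.1 p.2.2.2.1}

lemma card_puncturedCone_map {F K : Type} [CommRing F] [CommRing K] (e : F ≃+* K) (φ : F) :
    Nat.card (puncturedCone (e φ)) = Nat.card (puncturedCone φ) := by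
  have map_fY (x y z v : F) : fY (e φ) (e x) (e y) (e z) (e v) = e (fY φ x y z v) := by simp [fY]
  let e' : F ≃ K := e
  refine (Nat.card_congr <| (e'.prodCongr <| e'.prodCongr <| e'.prodCongr <|
    e'.prodCongr e').subtypeEquiv fun p ↦ ?_).symm
  simp [puncturedCone, e', map_fY, ← map_pow]

variable {F : Type} [Field F] [Fintype F] [DecidableEq F]

lemma card_puncturedCone_eq_sum_quadraticChar (hF : ringChar F ≠ 2) (φ : F) :
    (Nat.card (puncturedCone φ) : ℤ) =
      Fintype.card F ^ 4 - 1 + ∑ p, quadraticChar F (affineOctic φ p) := by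
  let e : puncturedCone φ ≃ Σ p : {p : F × F × F × F // p ≠ 0},
      {u : F // u ^ 2 = affineOctic φ p} :=
    { toFun p := ⟨⟨(p.1.1, p.1.2.1, p.1.2.2.1, p.1.2.2.2.1), p.2.1⟩, ⟨p.1.2.2.2.2, p.2.2⟩⟩
      invFun q := ⟨(q.1.1.1, q.1.1.2.1, q.1.1.2.2.1, q.1.1.2.2.2, q.2.1), q.1.2, q.2.2⟩ }
  have card_ne_zero : Fintype.card {p : F × F × F × F // p ≠ 0} = Fintype.card F ^ 4 - 1 := by
    rw [Fintype.card_subtype_compl, Fintype.card_subtype_eq]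
    simp only [Fintype.card_prod]
    ring_nf
  have sum_ne_zero : ∑ p : {p : F × F × F × F // p ≠ 0}, quadraticChar F (affineOctic φ p) =
      ∑ p, quadraticChar F (affineOctic φ p) := by
    rw [← sum_subtype (univ.erase 0) (by simp) fun p ↦ quadraticChar F (affineOctic φ p)]
    exact sum_erase _ (by simp [affineOctic, fY])
  rw [Nat.card_congr e, card_sigma_sq_eq hF, sum_ne_zero, card_ne_zero,
    Nat.cast_pred (pow_pos Fintype.card_pos 4), Nat.cast_pow]

theorem card_puncturedCone_eq_fiberWeight (hF : ringChar F ≠ 2) (φ : F) :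
    (Nat.card (puncturedCone φ) : ℤ) =
      Fintype.card F ^ 4 - 1 + (fiberWeight φ 0 0 +
        (Fintype.card F - 1) * (fiberWeight φ 0 1 + ∑ w, fiberWeight φ 1 w)) := by
  rw [card_puncturedCone_eq_sum_quadraticChar hF, sum_quadraticChar_affineOctic,
    sum_sum_eq_of_mul_left_invariant _ fun _ hc s w ↦ fiberWeight_mul_left φ hc s w]

end Cone

/-- For a prime `p` with `-1` not a square modulo `p`, the field `𝔽_p[i]` with `p²` elements. -/
abbrev GaussianField (p : ℕ) : Type := QuadraticAlgebra (ZMod p) (-1) 0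

namespace GaussianField

/-- The element `a + b i` of `𝔽_p[i]` named by a pair `(a, b)` of natural numbers. -/
def ofDigits (p : ℕ) : ℕ × ℕ →+ GaussianField p where
  toFun d := ⟨d.1, d.2⟩
  map_zero' := by ext <;> simp
  map_add' d d' := by ext <;> simp

/-- The pairs of residues, which name every element of `𝔽_p[i]` exactly once. -/
def digits (p : ℕ) : Finset (ℕ × ℕ) := range p ×ˢ range p

/-- The norm of `a + b i`. -/
def digitNorm (d : ℕ × ℕ) : ℕ := d.1 * d.1 + d.2 * d.2

section Fintype

variable {p : ℕ} [NeZero p]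

instance : Fintype (GaussianField p) :=
  .ofEquiv _ (QuadraticAlgebra.equivProd _ _).symm

lemma card_eq : Fintype.card (GaussianField p) = p ^ 2 := by
  rw [Fintype.card_congr (QuadraticAlgebra.equivProd _ _), Fintype.card_prod, ZMod.card, sq]

lemma sum_eq_sum_digits {M : Type*} [AddCommMonoid M] (f : GaussianField p → M) :
    ∑ z, f z = ∑ d ∈ digits p, f (ofDigits p d) := by
  have ofDigits_val (z : GaussianField p) : ofDigits p (z.re.val, z.im.val) = z := by
    ext <;> simp [ofDigits]
  refine sum_bij' (fun z _ ↦ (z.re.val, z.im.val)) (fun d _ ↦ ofDigits p d)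
    (by simp [digits, ZMod.val_lt]) (by simp) (fun z _ ↦ ofDigits_val z) ?_
    (fun z _ ↦ by rw [ofDigits_val])
  rintro ⟨a, b⟩ h
  simp only [digits, mem_product, mem_range] at h
  simp [ofDigits, ZMod.val_cast_of_lt h.1, ZMod.val_cast_of_lt h.2]

end Fintype

lemma ofDigits_one_zero (p : ℕ) : ofDigits p (1, 0) = 1 := by
  ext <;> simp [ofDigits, QuadraticAlgebra.re_one, QuadraticAlgebra.im_one]

lemma norm_ofDigits (p : ℕ) (d : ℕ × ℕ) :
    Algebra.norm (ZMod p) (ofDigits p d) = digitNorm d := by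
  have : Algebra.norm (ZMod p) (ofDigits p d) = (ofDigits p d).norm := by
    rw [Algebra.norm_apply, ← QuadraticAlgebra.det_toLinearMap_eq_norm]
    rfl
  rw [this, QuadraticAlgebra.norm_def]
  simp [ofDigits, digitNorm]

lemma pred_nsmul {p : ℕ} (hp : 0 < p) (z : GaussianField p) : (p - 1) • z = -z := by
  rw [eq_neg_iff_add_eq_zero, ← succ_nsmul, Nat.sub_add_cancel hp]
  ext <;> simp

lemma ne_two_of_neg_one_not_sq {p : ℕ} (h : ∀ r : ZMod p, r ^ 2 ≠ -1 + 0 * r) : p ≠ 2 := by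
  rintro rfl
  exact h 1 rfl

variable {p : ℕ} [Fact p.Prime] [neg_one_not_sq : Fact (∀ r : ZMod p, r ^ 2 ≠ -1 + 0 * r)]

lemma ringChar_ne_two : ringChar (GaussianField p) ≠ 2 := by
  rw [← Algebra.ringChar_eq (ZMod p), ZMod.ringChar_zmod_n]
  exact ne_two_of_neg_one_not_sq neg_one_not_sq.out

lemma quadraticChar_ofDigits (d : ℕ × ℕ) :
    quadraticChar (GaussianField p) (ofDigits p d) = eulerSign p (digitNorm d) := by
  rw [quadraticChar_eq_quadraticChar_norm (K := ZMod p) ringChar_ne_two, norm_ofDigits,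
    ← legendreSym_natCast_eq_eulerSign (ne_two_of_neg_one_not_sq neg_one_not_sq.out), legendreSym,
    Int.cast_natCast]

/- Negation is written as multiplication by `p - 1` below, so that the kernel only has to evaluate
arithmetic on natural numbers. -/

/-- The norm of the value of `xyQuartic`, on digits. -/
def xyDigitNorm (p φ : ℕ) (s w x : ℕ × ℕ) : ℕ :=
  digitNorm x * digitNorm (s + (p - 1) • x)
    * digitNorm (φ • (s + (p - 1) • x) + (p - 1) • w)
    * digitNorm (s + φ • (p - 1) • (x + w))

/-- The norm of the value of `zvQuartic`, on digits. -/
def zvDigitNorm (p φ : ℕ) (s w z : ℕ × ℕ) : ℕ :=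
  digitNorm z * digitNorm (z + (p - 1) • w) * digitNorm (s + z)
    * digitNorm (s + φ • (z + (p - 1) • w))

/-- The computable form of `fiberWeight` on `𝔽_p[i]`. -/
def digitFiberWeight (p φ : ℕ) (s w : ℕ × ℕ) : ℤ :=
  (∑ x ∈ digits p, eulerSign p (xyDigitNorm p φ s w x)) *
    ∑ z ∈ digits p, eulerSign p (zvDigitNorm p φ s w z)

lemma quadraticChar_xyQuartic_ofDigits (φ : ℕ) (s w x : ℕ × ℕ) :
    quadraticChar (GaussianField p) (xyQuartic φ (ofDigits p s) (ofDigits p w) (ofDigits p x)) =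
      eulerSign p (xyDigitNorm p φ s w x) := by
  have p_pos : 0 < p := (Fact.out : p.Prime).pos
  have p_ne_two := ne_two_of_neg_one_not_sq neg_one_not_sq.out
  simp only [xyDigitNorm, eulerSign_mul p_ne_two, ← quadraticChar_ofDigits, xyQuartic, map_mul,
    map_add, map_nsmul, pred_nsmul p_pos]
  simp only [nsmul_eq_mul, mul_neg, ← sub_eq_add_neg]

lemma quadraticChar_zvQuartic_ofDigits (φ : ℕ) (s w z : ℕ × ℕ) :
    quadraticChar (GaussianField p) (zvQuartic φ (ofDigits p s) (ofDigits p w) (ofDigits p z)) =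
      eulerSign p (zvDigitNorm p φ s w z) := by
  have p_pos : 0 < p := (Fact.out : p.Prime).pos
  have p_ne_two := ne_two_of_neg_one_not_sq neg_one_not_sq.out
  simp only [zvDigitNorm, eulerSign_mul p_ne_two, ← quadraticChar_ofDigits, zvQuartic, map_mul,
    map_add, map_nsmul, pred_nsmul p_pos]
  simp only [nsmul_eq_mul, ← sub_eq_add_neg]

lemma fiberWeight_ofDigits (φ : ℕ) (s w : ℕ × ℕ) :
    fiberWeight (φ : GaussianField p) (ofDigits p s) (ofDigits p w) = digitFiberWeight p φ s w := by
  unfold fiberWeight fiberSum digitFiberWeight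
  simp only [sum_eq_sum_digits, quadraticChar_xyQuartic_ofDigits, quadraticChar_zvQuartic_ofDigits]

theorem card_puncturedCone_eq_digitFiberWeight (φ : ℕ) :
    (Nat.card (puncturedCone (φ : GaussianField p)) : ℤ) =
      (p ^ 2) ^ 4 - 1 + (digitFiberWeight p φ 0 0 + (p ^ 2 - 1) *
        (digitFiberWeight p φ 0 (1, 0) + ∑ w ∈ digits p, digitFiberWeight p φ (1, 0) w)) := by
  rw [card_puncturedCone_eq_fiberWeight ringChar_ne_two, sum_eq_sum_digits, card_eq]
  simp only [← fiberWeight_ofDigits, map_zero, ofDigits_one_zero, Nat.cast_pow]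

end GaussianField

section ElevenSquared

open GaussianField

instance : Fact (Nat.Prime 11) := ⟨by decide⟩

instance : Fact (∀ r : ZMod 11, r ^ 2 ≠ -1 + 0 * r) := ⟨by decide⟩

lemma digitFiberWeight_zero_zero : digitFiberWeight 11 3 0 0 = 14400 := by
  decide +kernel

lemma sum_digitFiberWeight_projectiveLine :
    digitFiberWeight 11 3 0 (1, 0) + ∑ w ∈ digits 11, digitFiberWeight 11 3 (1, 0) w = -2147 := by
  decide +kernel

lemma card_puncturedCone_gaussianField :
    Nat.card (puncturedCone (3 : GaussianField 11)) = 214115640 := by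
  have count := card_puncturedCone_eq_digitFiberWeight (p := 11) 3
  rw [digitFiberWeight_zero_zero, sum_digitFiberWeight_projectiveLine, Nat.cast_ofNat] at count
  exact_mod_cast count.trans (show _ = (214115640 : ℤ) by norm_num)

end ElevenSquared

/-- Point count over `𝔽₁₂₁` with `φ` the image of `3` under `ℤ → F` (so that
`φ² + φ = 1`): the number of tuples `(x,y,z,v,u) ∈ F⁵` with
`(x,y,z,v) ≠ (0,0,0,0)` and `u² = f_Y(x,y,z,v)` equals
`214115640 = 1784297·120`. -/
theorem point_count_fY_121 (F : Type) [Field F] [Fintype F]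
    (hF : Fintype.card F = 121) (φ : F) (hφ : φ = ((3 : ℤ) : F)) :
    φ ^ 2 + φ = 1 ∧
    Nat.card {p : F × F × F × F × F |
      (p.1, p.2.1, p.2.2.1, p.2.2.2.1) ≠ (0, 0, 0, 0) ∧
      p.2.2.2.2 ^ 2 = fY φ p.1 p.2.1 p.2.2.1 p.2.2.2.1} = 214115640 := by
  subst hφ
  have eleven_eq_zero : (11 : F) = 0 := by
    have : (11 : F) ^ 2 = 0 := by
      rw [← FiniteField.cast_card_eq_zero F, hF]
      norm_num
    exact pow_eq_zero_iff two_ne_zero |>.mp this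
  refine ⟨by linear_combination eleven_eq_zero, ?_⟩
  let e : F ≃+* GaussianField 11 :=
    FiniteField.ringEquivOfCardEq (by rw [hF, GaussianField.card_eq]; rfl)
  calc Nat.card (puncturedCone ((3 : ℤ) : F))
    _ = Nat.card (puncturedCone (e ((3 : ℤ) : F))) := (card_puncturedCone_map e _).symm
    _ = Nat.card (puncturedCone (3 : GaussianField 11)) := by rw [map_intCast, Int.cast_ofNat]
    _ = 214115640 := card_puncturedCone_gaussianField
end
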